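/- arXiv:1202.3567 — 6 statements merged into one kernel-verified Lean document; each statement's English description precedes it below -/
import Mathlib

section
/- Let k be a field of characteristic 0, let a ∈ k be a non-square, and let K be a finite extension of k containing an element α with α² = a; set L = k(α) ⊆ K. Let c ∈ k be nonzero, and let t ∈ k with t² ≠ a and z ∈ K satisfy c·(t² − a) = N_{K/k}(z). Then the element w = (t − α)⁻¹ · N_{K/L}(z) of L satisfies N_{L/k}(w) = c. (Well-definedness of the fibration U → S in the proof of Theorem 1.) -/
open IntermediateField

/- On `k(α)`, the characteristic polynomial of multiplication by `α` is the minimal polynomial `f`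
of `α`, so `N_{k(α)/k} (t - α) = f(t)`, which is `t² - a` when `α² = a` is not a square in `k`.
Multiplicativity and transitivity of norms then give
`N_{k(α)/k} ((t - α)⁻¹ N_{K/k(α)} z) = f(t)⁻¹ N_{K/k} z = c`. -/

theorem norm_algebraMap_sub_powerBasis_gen {R S : Type*} [CommRing R] [CommRing S] [Algebra R S]
    (pb : PowerBasis R S) (t : R) :
    Algebra.norm R (algebraMap R S t - pb.gen) = (minpoly R pb.gen).eval t := by
  rw [← charpoly_leftMulMatrix, Matrix.eval_charpoly, Algebra.norm_eq_matrix_det pb.basis, map_sub,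
    AlgHom.commutes, Matrix.algebraMap_eq_diagonal, Matrix.scalar_apply, Pi.algebraMap_def,
    Algebra.algebraMap_self_apply]

theorem norm_algebraMap_sub_adjoinSimple_gen {k K : Type*} [Field k] [Field K] [Algebra k K]
    {α : K} (hα : IsIntegral k α) (t : k) :
    Algebra.norm k (algebraMap k k⟮α⟯ t - AdjoinSimple.gen k α) = (minpoly k α).eval t := by
  simpa only [adjoin.powerBasis_gen, minpoly_gen] using
    norm_algebraMap_sub_powerBasis_gen (adjoin.powerBasis hα) t

theorem minpoly_eq_X_pow_sub_C {k A : Type*} [Field k] [Ring A] [Nontrivial A] [Algebra k A]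
    {p : ℕ} (hp : p.Prime) {a : k} (ha : ∀ b : k, b ^ p ≠ a) {α : A}
    (hα : α ^ p = algebraMap k A a) :
    minpoly k α = Polynomial.X ^ p - Polynomial.C a :=
  (minpoly.eq_of_irreducible_of_monic (X_pow_sub_C_irreducible_of_prime hp ha) (by simp [hα])
    (Polynomial.monic_X_pow_sub_C a hp.ne_zero)).symm

theorem norm_of_fibration_map_general {k K : Type*} [Field k] [Field K] [Algebra k K]
    [FiniteDimensional k K] {α z : K} {c t : k} (ht : (minpoly k α).eval t ≠ 0)
    (hz : c * (minpoly k α).eval t = Algebra.norm k z) :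
    Algebra.norm k
      ((algebraMap k k⟮α⟯ t - AdjoinSimple.gen k α)⁻¹ * Algebra.norm k⟮α⟯ z) = c := by
  have hnorm := norm_algebraMap_sub_adjoinSimple_gen (.of_finite k α) t
  set u := algebraMap k k⟮α⟯ t - AdjoinSimple.gen k α
  have hu : u ≠ 0 := by
    rwa [← Algebra.norm_ne_zero_iff (R := k), hnorm]
  refine mul_right_cancel₀ ht ?_
  calc
    Algebra.norm k (u⁻¹ * Algebra.norm k⟮α⟯ z) * (minpoly k α).eval t
        = Algebra.norm k (Algebra.norm k⟮α⟯ z) := by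
          rw [← hnorm, ← map_mul, mul_comm, mul_inv_cancel_left₀ hu]
    _ = Algebra.norm k z := Algebra.norm_norm
    _ = c * (minpoly k α).eval t := hz.symm

/-- Well-definedness of the fibration `U → S` in the proof of Theorem 1
(Derenthal–Smeets–Wei): if `c(t² − a) = N_{K/k}(z)` with `t² ≠ a`, then
`w = (t − α)⁻¹ N_{K/L}(z) ∈ L = k(α)` satisfies `N_{L/k}(w) = c`. -/
theorem norm_of_fibration_map (k K : Type) [Field k] [CharZero k] [Field K]
    [Algebra k K] [FiniteDimensional k K]
    (a : k) (ha : ¬∃ x : k, x ^ 2 = a)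
    (α : K) (hα : α ^ 2 = algebraMap k K a)
    (c : k) (hc : c ≠ 0)
    (t : k) (ht : t ^ 2 ≠ a)
    (z : K) (hz : c * (t ^ 2 - a) = Algebra.norm k z) :
    Algebra.norm k
      ((⟨algebraMap k K t - α,
          sub_mem (IntermediateField.algebraMap_mem _ t)
            (IntermediateField.mem_adjoin_simple_self k α)⟩ : k⟮α⟯)⁻¹ *
        Algebra.norm (↥k⟮α⟯) z) = c := by
  have hmin := minpoly_eq_X_pow_sub_C Nat.prime_two (not_exists.mp ha) hα
  exact norm_of_fibration_map_general (by simpa [hmin, sub_ne_zero] using ht)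
    (by simpa [hmin] using hz)
end

section
/- Let K/k be a quartic extension of fields of characteristic 0 which contains a quadratic subextension L = k(α) with α² = a ∈ k, a not a square in k. Take β ∈ K with K = L(β), so that (1, α, β, αβ) is a k-basis of K. Let ρ ∈ L be nonzero. Define maps f₀, f₁ : k⁴ → k by ρ · N_{K/L}((y₁ + y₂α) + (y₃ + y₄α)β) = f₀(y₁,…,y₄) + f₁(y₁,…,y₄)·α for all (y₁,…,y₄) ∈ k⁴. Then f₀ and f₁ are quadratic forms on k⁴ of rank 4; that is, the associated symmetric bilinear forms of f₀ and of f₁ are nondegenerate. (Lemma 2.2.) -/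
open IntermediateField

/-!
The norm of a quadratic extension `K/L` is a quadratic form over `L` whose polar form is
`(x, y) ↦ Tr x * Tr y - Tr (x * y)`, the trace of `x` times the conjugate of `y`. An element `x` of
its radical satisfies `Tr ((Tr x - x) * y) = 0` for all `y`, so that `x = Tr x` if `K/L` is
separable; then `Tr x = 2 * Tr x`, and `x = 0`. Nondegeneracy survives composition with any nonzero
`k`-linear map `s : L → k`: the values of a nonzero functional `B(x, ·)` fill all of `L`.
The forms `f₀` and `f₁` arise in this way from the two coordinates of `ρ * N z` in the basis `1, α`.
-/

section PolarBilin

variable {R M M' N : Type*} [CommRing R] [AddCommGroup M] [Module R M] [AddCommGroup M']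
  [Module R M'] [AddCommGroup N] [Module R N]

theorem nondegenerate_polarBilin_of_separatingLeft {Q : QuadraticMap R M N}
    (hQ : Q.polarBilin.SeparatingLeft) : Q.polarBilin.Nondegenerate :=
  ⟨hQ, fun y hy ↦ hQ y fun x ↦ (QuadraticMap.polar_comm Q y x).trans (hy x)⟩

theorem nondegenerate_polarBilin_comp_equiv {Q : QuadraticMap R M N}
    (hQ : Q.polarBilin.Nondegenerate) (e : M' ≃ₗ[R] M) :
    (Q.comp (e : M' →ₗ[R] M)).polarBilin.Nondegenerate := by
  rw [QuadraticMap.polarBilin_comp]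
  exact hQ.congr e.symm e.symm

theorem nondegenerate_polarBilin_compQuadraticMap' {L V : Type*} [Field L] [Algebra R L]
    [AddCommGroup V] [Module R V] [Module L V] [IsScalarTower R L V] {Q : QuadraticForm L V}
    (hQ : Q.polarBilin.Nondegenerate) {s : L →ₗ[R] N} (hs : s ≠ 0) :
    (s.compQuadraticMap' Q).polarBilin.Nondegenerate := by
  refine nondegenerate_polarBilin_of_separatingLeft fun x hx ↦ hQ.1 x fun y ↦ ?_
  by_contra hxy
  refine hs (LinearMap.ext fun z ↦ ?_)
  calc
    s z = s (QuadraticMap.polar Q x ((z / Q.polarBilin x y) • y)) := by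
      rw [QuadraticMap.polar_smul_right, smul_eq_mul, ← QuadraticMap.polarBilin_apply_apply,
        div_mul_cancel₀ z hxy]
    _ = 0 := by
      rw [← LinearMap.compQuadraticMap_polar]
      exact hx _

end PolarBilin

theorem polar_det_fin_two {R : Type*} [CommRing R] (A B : Matrix (Fin 2) (Fin 2) R) :
    QuadraticMap.polar Matrix.det A B = A.trace * B.trace - (A * B).trace := by
  simp only [QuadraticMap.polar, Matrix.det_fin_two, Matrix.trace_fin_two, Matrix.add_apply,
    Matrix.mul_apply, Fin.sum_univ_two]
  ring

theorem algebraNorm_smul {R S : Type*} [CommRing R] [Ring S] [Algebra R S] [Module.Free R S]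
    (c : R) (x : S) :
    Algebra.norm R (c • x) = c ^ Module.finrank R S * Algebra.norm R x := by
  rw [Algebra.smul_def, map_mul, Algebra.norm_algebraMap]

section NormForm

variable {R S : Type*} [CommRing R] [StrongRankCondition R] [CommRing S] [Algebra R S]
  [Algebra.IsQuadraticExtension R S]

theorem polar_norm_of_isQuadraticExtension (x y : S) :
    QuadraticMap.polar (Algebra.norm R) x y =
      Algebra.trace R S x * Algebra.trace R S y - Algebra.trace R S (x * y) := by
  let b : Module.Basis (Fin 2) R S :=
    Module.finBasisOfFinrankEq R S (Algebra.IsQuadraticExtension.finrank_eq_two R S)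
  simpa only [QuadraticMap.polar, Algebra.norm_eq_matrix_det b, Algebra.trace_eq_matrix_trace b,
    map_add, map_mul] using
    polar_det_fin_two (Algebra.leftMulMatrix b x) (Algebra.leftMulMatrix b y)

variable (R S) in
/-- The norm of a quadratic ring extension `S/R`, as a quadratic form over `R`. -/
noncomputable def normForm : QuadraticForm R S :=
  .ofPolar (Algebra.norm R)
    (fun c x ↦ by
      rw [algebraNorm_smul, Algebra.IsQuadraticExtension.finrank_eq_two, sq, smul_eq_mul])
    (fun x x' y ↦ by
      simp only [polar_norm_of_isQuadraticExtension, add_mul, map_add]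
      ring)
    (fun c x y ↦ by
      simp only [polar_norm_of_isQuadraticExtension, smul_mul_assoc, map_smul, smul_eq_mul]
      ring)

theorem nondegenerate_polarBilin_normForm (h : (Algebra.traceForm R S).Nondegenerate) :
    (normForm R S).polarBilin.Nondegenerate := by
  refine nondegenerate_polarBilin_of_separatingLeft fun x hx ↦ ?_
  have trace_mul (y : S) :
      Algebra.trace R S x * Algebra.trace R S y = Algebra.trace R S (x * y) := by
    rw [← sub_eq_zero, ← polar_norm_of_isQuadraticExtension]
    exact hx y
  have eq_trace : algebraMap R S (Algebra.trace R S x) = x := by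
    refine sub_eq_zero.mp (h.1 _ fun y ↦ ?_)
    rw [Algebra.traceForm_apply, sub_mul, ← Algebra.smul_def, map_sub, map_smul, smul_eq_mul,
      trace_mul, sub_self]
  have trace_eq_two_mul : Algebra.trace R S x = 2 * Algebra.trace R S x := by
    conv_lhs => rw [← eq_trace, Algebra.trace_algebraMap,
      Algebra.IsQuadraticExtension.finrank_eq_two, nsmul_eq_mul, Nat.cast_ofNat]
  have trace_eq_zero : Algebra.trace R S x = 0 := by linear_combination -trace_eq_two_mul
  rw [← eq_trace, trace_eq_zero, map_zero]

end NormForm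

section Field

variable {k L K : Type*} [Field k] [Field L] [Algebra k L]

theorem isQuadraticExtension_adjoin_simple_of_sq_eq {α : L} {a : k} (ha : ¬∃ x : k, x ^ 2 = a)
    (hα : α ^ 2 = algebraMap k L a) : Algebra.IsQuadraticExtension k k⟮α⟯ := by
  have irreducible : Irreducible (.X ^ 2 - .C a : Polynomial k) :=
    X_pow_sub_C_irreducible_of_prime Nat.prime_two (not_exists.mp ha)
  have monic : (.X ^ 2 - .C a : Polynomial k).Monic := Polynomial.monic_X_pow_sub_C a two_ne_zero
  have root : Polynomial.aeval α (.X ^ 2 - .C a : Polynomial k) = 0 := by simp [hα]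
  refine ⟨?_⟩
  rw [IntermediateField.adjoin.finrank ⟨_, monic, root⟩,
    ← minpoly.eq_of_irreducible_of_monic irreducible root monic, Polynomial.natDegree_X_pow_sub_C]

theorem notMem_range_algebraMap_of_sq_eq {α : L} {a : k} (ha : ¬∃ x : k, x ^ 2 = a)
    (hα : α ^ 2 = algebraMap k L a) : α ∉ (algebraMap k L).range := by
  rintro ⟨x, rfl⟩
  exact ha ⟨x, (algebraMap k L).injective ((map_pow _ _ _).trans hα)⟩

theorem notMem_range_algebraMap_of_adjoin_simple_eq_top [Algebra.IsQuadraticExtension k L] {x : L}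
    (hx : k⟮x⟯ = ⊤) : x ∉ (algebraMap k L).range := fun hmem ↦ by
  have finrank_eq_one : Module.finrank k L = 1 :=
    IntermediateField.bot_eq_top_iff_finrank_eq_one.mp
      ((IntermediateField.adjoin_simple_eq_bot_iff.mpr hmem).symm.trans hx)
  simp [Algebra.IsQuadraticExtension.finrank_eq_two] at finrank_eq_one

theorem exists_basis_eq_one_self [Algebra.IsQuadraticExtension k L] {x : L}
    (hx : x ∉ (algebraMap k L).range) : ∃ b : Module.Basis (Fin 2) k L, ⇑b = ![1, x] := by
  have hli : LinearIndependent k ![1, x] :=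
    (LinearIndependent.pair_iff' one_ne_zero).mpr fun c hc ↦
      hx ⟨c, (Algebra.algebraMap_eq_smul_one c).trans hc⟩
  refine ⟨basisOfLinearIndependentOfCardEqFinrank hli ?_,
    coe_basisOfLinearIndependentOfCardEqFinrank hli _⟩
  rw [Fintype.card_fin, Algebra.IsQuadraticExtension.finrank_eq_two]

variable [Field K] [Algebra L K] [Algebra k K] [IsScalarTower k L K]

variable (k) in
theorem isQuadraticExtension_of_finrank_eq_four [Algebra.IsQuadraticExtension k L]
    (h : Module.finrank k K = 4) : Algebra.IsQuadraticExtension L K where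
  finrank_eq_two' := by
    have finrank_mul := Module.finrank_mul_finrank k L K
    rw [Algebra.IsQuadraticExtension.finrank_eq_two k L, h] at finrank_mul
    lia

variable [Algebra.IsQuadraticExtension L K]

theorem exists_basis_of_isQuadraticExtension_tower [Algebra.IsQuadraticExtension k L]
    {α : L} (hα : α ∉ (algebraMap k L).range) {β : K} (hβ : β ∉ (algebraMap L K).range) :
    ∃ e : Module.Basis (Fin 4) k K,
      ⇑e = ![1, algebraMap L K α, β, algebraMap L K α * β] := by
  obtain ⟨b, hb⟩ := exists_basis_eq_one_self hα
  obtain ⟨c, hc⟩ := exists_basis_eq_one_self hβ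
  refine ⟨(b.smulTower' c).reindex finProdFinEquiv, ?_⟩
  funext j
  fin_cases j <;>
    simp [Module.Basis.smulTower'_apply, hb, hc, Algebra.smul_def, finProdFinEquiv, Fin.divNat,
      Fin.modNat]

variable [Algebra.IsSeparable L K]

theorem exists_nondegenerate_quadraticForm_of_mul_norm_eq_sum {ι κ : Type*} [Fintype ι] [Fintype κ]
    (b : Module.Basis ι k L) (e : Module.Basis κ k K) {ρ : L} (hρ : ρ ≠ 0)
    {f : ι → (κ → k) → k}
    (hf : ∀ y, ρ * Algebra.norm L (∑ j, y j • e j) = ∑ i, f i y • b i) (i : ι) :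
    ∃ Q : QuadraticForm k (κ → k), ⇑Q = f i ∧ Q.polarBilin.Nondegenerate := by
  let s : L →ₗ[k] k := b.coord i ∘ₗ LinearMap.mulLeft k ρ
  have hs : s ≠ 0 := fun h ↦ by
    have : s (ρ⁻¹ * b i) = 1 := by simp [s, hρ]
    simp [h] at this
  refine ⟨(s.compQuadraticMap' (normForm L K)).comp (e.equivFun.symm : (κ → k) →ₗ[k] K), ?_,
    nondegenerate_polarBilin_comp_equiv (nondegenerate_polarBilin_compQuadraticMap'
      (nondegenerate_polarBilin_normForm (traceForm_nondegenerate L K)) hs) _⟩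
  funext y
  calc
    b.coord i (ρ * Algebra.norm L (e.equivFun.symm y)) = b.coord i (∑ i, f i y • b i) := by
      rw [e.equivFun_symm_apply, hf]
    _ = f i y := by rw [b.coord_apply, b.repr_sum_self]

theorem rank_four_quadratic_forms_of_quartic_norm_general [Algebra.IsQuadraticExtension k L]
    {α : L} (hα : α ∉ (algebraMap k L).range) {β : K} (hβ : β ∉ (algebraMap L K).range)
    {ρ : L} (hρ : ρ ≠ 0) {f₀ f₁ : (Fin 4 → k) → k}
    (hf : ∀ y : Fin 4 → k,
      ρ * Algebra.norm L
          ((algebraMap k K (y 0) + algebraMap k K (y 1) * algebraMap L K α) +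
            (algebraMap k K (y 2) + algebraMap k K (y 3) * algebraMap L K α) * β)
        = algebraMap k L (f₀ y) + algebraMap k L (f₁ y) * α) :
    ∃ Q₀ Q₁ : QuadraticForm k (Fin 4 → k),
      ⇑Q₀ = f₀ ∧ ⇑Q₁ = f₁ ∧
      Q₀.polarBilin.Nondegenerate ∧ Q₁.polarBilin.Nondegenerate := by
  obtain ⟨b, hb⟩ := exists_basis_eq_one_self hα
  obtain ⟨e, he⟩ := exists_basis_of_isQuadraticExtension_tower hα hβ
  have sum_smul_e (y : Fin 4 → k) : ∑ j, y j • e j =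
      (algebraMap k K (y 0) + algebraMap k K (y 1) * algebraMap L K α) +
        (algebraMap k K (y 2) + algebraMap k K (y 3) * algebraMap L K α) * β := by
    simp only [he, Fin.sum_univ_four, Matrix.cons_val, Algebra.smul_def]
    ring
  have hsum (y : Fin 4 → k) :
      ρ * Algebra.norm L (∑ j, y j • e j) = ∑ i, ![f₀, f₁] i y • b i := by
    rw [sum_smul_e, hf]
    simp [hb, Fin.sum_univ_two, Algebra.smul_def]
  obtain ⟨Q₀, hQ₀, nondeg₀⟩ := exists_nondegenerate_quadraticForm_of_mul_norm_eq_sum b e hρ hsum 0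
  obtain ⟨Q₁, hQ₁, nondeg₁⟩ := exists_nondegenerate_quadraticForm_of_mul_norm_eq_sum b e hρ hsum 1
  exact ⟨Q₀, Q₁, hQ₀, hQ₁, nondeg₀, nondeg₁⟩

end Field

/-- **Lemma 2.2** (Derenthal–Smeets–Wei): let `K/k` be a quartic extension of fields of
characteristic `0` containing the quadratic subextension `L = k(α)`, `α² = a` a
non-square, and `K = L(β)`. If `ρ ∈ L^×` and
`ρ·N_{K/L}((y₁ + y₂α) + (y₃ + y₄α)β) = f₀(y) + f₁(y)·α`, then `f₀` and `f₁` are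
quadratic forms on `k⁴` of rank 4, i.e. their polar symmetric bilinear forms are
nondegenerate. -/
theorem rank_four_quadratic_forms_of_quartic_norm
    (k K : Type) [Field k] [CharZero k] [Field K] [Algebra k K]
    (hdeg : Module.finrank k K = 4)
    (a : k) (ha : ¬∃ x : k, x ^ 2 = a)
    (α : K) (hα : α ^ 2 = algebraMap k K a)
    (β : K) (hβ : IntermediateField.adjoin (↥k⟮α⟯) {β} = ⊤)
    (ρ : ↥k⟮α⟯) (hρ : ρ ≠ 0)
    (f₀ f₁ : (Fin 4 → k) → k)
    (hf : ∀ y : Fin 4 → k,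
      ((ρ * Algebra.norm (↥k⟮α⟯)
          ((algebraMap k K (y 0) + algebraMap k K (y 1) * α) +
            (algebraMap k K (y 2) + algebraMap k K (y 3) * α) * β) : ↥k⟮α⟯) : K)
        = algebraMap k K (f₀ y) + algebraMap k K (f₁ y) * α) :
    ∃ Q₀ Q₁ : QuadraticForm k (Fin 4 → k),
      ⇑Q₀ = f₀ ∧ ⇑Q₁ = f₁ ∧
      Q₀.polarBilin.Nondegenerate ∧ Q₁.polarBilin.Nondegenerate := by
  have := isQuadraticExtension_adjoin_simple_of_sq_eq ha hα
  have := isQuadraticExtension_of_finrank_eq_four k (L := k⟮α⟯) hdeg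
  have gen_notMem : AdjoinSimple.gen k α ∉ (algebraMap k k⟮α⟯).range :=
    notMem_range_algebraMap_of_sq_eq ha (Subtype.ext hα)
  exact rank_four_quadratic_forms_of_quartic_norm_general gen_notMem
    (notMem_range_algebraMap_of_adjoin_simple_eq_top hβ) hρ fun y ↦ Subtype.ext (hf y)
end

section
/- Let F be a field, let c ∈ F be nonzero, let r ≥ 1 and n ≥ 1 be integers, and let η₁, …, η_r ∈ F. Then the polynomial c·∏_{i=1}^r (t − η_i) − u₁⋯u_n is irreducible in the polynomial ring F[t, u₁, …, u_n]. (Geometric integrality of the variety X defined by P(t) = N_{K/k}(z), used in the proof of Proposition 3.2.) -/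
/-!
The polynomial `P - u₁⋯uₙ` is linear in `uₙ`, with coefficients `-u₁⋯uₙ₋₁` and `P`, so it is
irreducible as soon as these are coprime. Every divisor of a monomial is, up to a unit, again a
monomial, and no `uⱼ` divides a nonzero polynomial `P` in which it does not occur.
-/

open MvPolynomial

lemma not_X_dvd_of_notMem_vars {R σ : Type*} [CommSemiring R] {p : MvPolynomial σ R} {i : σ}
    (hp : p ≠ 0) (hi : i ∉ p.vars) : ¬ X i ∣ p := by
  rintro ⟨q, rfl⟩
  have hdeg : degreeOf i (q * X i) = degreeOf i q + 1 :=
    (degreeOf_mul_X_eq_degreeOf_add_one_iff i q).2 (right_ne_zero_of_mul hp)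
  rw [mul_comm, mem_vars_iff_degreeOf_ne_zero, hdeg] at hi
  exact hi (Nat.succ_ne_zero _)

lemma isRelPrime_monomial_one {R σ : Type*} [CommRing R] [NoZeroDivisors R]
    {p : MvPolynomial σ R} {d : σ →₀ ℕ} (hp : ∀ j ∈ d.support, ¬ X j ∣ p) :
    IsRelPrime (monomial d 1) p := by
  intro q hqd hqp
  obtain ⟨m, a, hmd, ha, rfl⟩ := dvd_monomial_one_iff_exists.1 hqd
  have hm : m = 0 := by
    by_contra hm
    obtain ⟨j, hj⟩ := Finsupp.support_nonempty_iff.2 hm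
    have hXj : X j ∣ monomial m a := X_dvd_monomial.2 (.inr (Finsupp.mem_support_iff.1 hj))
    exact hp j (Finsupp.support_mono hmd hj) (hXj.trans hqp)
  simpa [hm] using ha

section IsDomain

variable {R σ : Type*} [CommRing R] [IsDomain R]

lemma irreducible_sub_monomial_one {p : MvPolynomial σ R} {d : σ →₀ ℕ} {i : σ}
    (hdi : d i = 1) (hi : i ∉ p.vars) (hp : ∀ j ∈ d.support, ¬ X j ∣ p) :
    Irreducible (p - monomial d 1) := by
  classical
  have hlin : p - monomial d 1 = -monomial (d.erase i) 1 * X i + p := by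
    rw [← pow_one (X i), neg_mul, ← monomial_add_single, ← hdi, Finsupp.erase_add_single]
    ring
  rw [hlin]
  refine irreducible_mul_X_add _ _ i (by simp) ?_ hi (IsRelPrime.neg_left ?_)
  · rw [vars_neg, vars_monomial one_ne_zero, Finsupp.support_erase]
    exact Finset.notMem_erase i _
  · refine isRelPrime_monomial_one fun j hj ↦ hp j ?_
    rw [Finsupp.support_erase] at hj
    exact Finset.mem_of_mem_erase hj

theorem irreducible_norm_form_equation_general {ι : Type*} [Fintype ι] [Nonempty ι]
    {p : MvPolynomial σ R} {u : ι → σ} (hu : u.Injective) (hp : p ≠ 0)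
    (hup : ∀ j, u j ∉ p.vars) : Irreducible (p - ∏ j, X (u j)) := by
  classical
  obtain ⟨i⟩ := ‹Nonempty ι›
  have hprod : ∏ j, X (u j) = monomial (∑ j, Finsupp.single (u j) 1) (1 : R) :=
    (monomial_sum_one _ _).symm
  rw [hprod]
  refine irreducible_sub_monomial_one (i := u i) ?_ (hup i) fun k hk ↦ ?_
  · simp [Finsupp.finsetSum_apply, Finsupp.single_apply, hu.eq_iff]
  · obtain ⟨j, -, hj⟩ := Finset.mem_biUnion.1 (Finsupp.support_finsetSum hk)
    obtain rfl : k = u j := by simpa using Finsupp.support_single_subset hj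
    exact not_X_dvd_of_notMem_vars hp (hup j)

end IsDomain

section SplitPolynomial

variable {R σ ι : Type*} [CommRing R]

lemma C_mul_prod_X_sub_C_ne_zero [IsDomain R] {c : R} (hc : c ≠ 0) (t : σ) (s : Finset ι)
    (η : ι → R) : (C c * ∏ i ∈ s, (X t - C (η i)) : MvPolynomial σ R) ≠ 0 := by
  have hX (a : R) : (X t - C a : MvPolynomial σ R) ≠ 0 := by
    intro h
    simpa using congr(eval (fun _ ↦ a + 1) $h)
  exact mul_ne_zero (C_ne_zero.2 hc) (Finset.prod_ne_zero_iff.2 fun i _ ↦ hX (η i))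

lemma vars_C_mul_prod_X_sub_C_subset (c : R) (t : σ) (s : Finset ι) (η : ι → R) :
    (C c * ∏ i ∈ s, (X t - C (η i)) : MvPolynomial σ R).vars ⊆ {t} := by
  have hC (a : R) : C a ∈ supported R {t} := (supported R {t}).algebraMap_mem a
  have hX : X t ∈ supported R {t} := Algebra.subset_adjoin ⟨t, rfl, rfl⟩
  have h : C c * ∏ i ∈ s, (X t - C (η i)) ∈ supported R {t} :=
    mul_mem (hC c) (prod_mem fun i _ ↦ sub_mem hX (hC (η i)))
  exact_mod_cast mem_supported.1 h

end SplitPolynomial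

/-- Geometric integrality of the variety `X` defined by `P(t) = N_{K/k}(z)`, used in
the proof of Proposition 3.2 (Derenthal–Smeets–Wei): over any field `F`, the polynomial
`c·∏ᵢ(t − ηᵢ) − u₁⋯uₙ` is irreducible in `F[t, u₁, …, uₙ]`. -/
theorem irreducible_norm_form_equation
    (F : Type) [Field F] (c : F) (hc : c ≠ 0)
    (r n : ℕ) (hr : 1 ≤ r) (hn : 1 ≤ n) (η : Fin r → F) :
    Irreducible
      (C c * ∏ i : Fin r, (X 0 - C (η i)) - ∏ j : Fin n, X j.succ :
        MvPolynomial (Fin (n + 1)) F) := by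
  have : Nonempty (Fin n) := ⟨⟨0, hn⟩⟩
  exact irreducible_norm_form_equation_general (Fin.succ_injective n)
    (C_mul_prod_X_sub_C_ne_zero hc 0 _ η) fun j hj ↦
      j.succ_ne_zero (Finset.mem_singleton.1 (vars_C_mul_prod_X_sub_C_subset c 0 _ η hj))
end

section
/- Let F be an algebraically closed field of characteristic 0, let c ∈ F be nonzero, let r ≥ 1 and n ≥ 1 be integers, and let η₁, …, η_r ∈ F be pairwise distinct. Let R = F[t, u₁, …, u_n] / (c·∏_{i=1}^r (t − η_i) − u₁⋯u_n). Then every unit of the ring R is the image of a nonzero constant: the canonical map F^× → R^× is surjective (and R^× ≅ F^×). (The claim k̄[X]^× = k̄^× in the proof of Proposition 3.2.) -/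
open MvPolynomial

/-!
Write `D = A[u₂, …, uₙ]`, `q = u₂⋯uₙ`, `u = u₁` and `K = Frac D`, so that the ring in question is
`R = D[u, t]/(p(t) - q u)`. Since `p` is monic up to a unit, divisibility by `p(t) - q u` in
`D[u][t]` can be tested over `K`, where it means vanishing at `u = p(t)/q`. Hence `R` embeds
into `K[t]`, and a unit of `R` is some `k ∈ K`. Setting `u = 0` changes an element of `R` only by a
multiple of `p`, so `k` is congruent modulo `p` to some `g ∈ D[t]`. As `p` is not constant,
`k` is then the remainder of `g` modulo `p`, which has coefficients in `D`. So the units of `R` are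
those of `D`, which are those of `A`.
-/

open scoped Polynomial Polynomial.Bivariate

theorem unitsMap_surjective_of_forall_mem_range {M N : Type*} [Monoid M] [Monoid N] {f : M →* N}
    (hf : Function.Injective f) (h : ∀ v : Nˣ, (v : N) ∈ Set.range f) :
    Function.Surjective (Units.map f) := by
  intro v
  obtain ⟨a, ha⟩ := h v
  obtain ⟨b, hb⟩ := h v⁻¹
  have hab : a * b = 1 := hf (by rw [map_mul, ha, hb, v.mul_inv, map_one])
  have hba : b * a = 1 := hf (by rw [map_mul, ha, hb, v.inv_mul, map_one])
  exact ⟨⟨a, b, hab, hba⟩, Units.ext ha⟩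

theorem unitsMap_algebraMap_surjective_of_algEquiv {A B S T : Type*} [CommSemiring A]
    [CommSemiring B] [Semiring S] [Semiring T] [Algebra A B] [Algebra A S] [Algebra A T]
    [Algebra B T] [IsScalarTower A B T] (e : S ≃ₐ[A] T)
    (hAB : Function.Surjective (Units.map (algebraMap A B).toMonoidHom))
    (hBT : Function.Surjective (Units.map (algebraMap B T).toMonoidHom)) :
    Function.Surjective (Units.map (algebraMap A S).toMonoidHom) := by
  intro v
  obtain ⟨b, hb⟩ := hBT (Units.map e.toMonoidHom v)
  obtain ⟨a, rfl⟩ := hAB b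
  refine ⟨a, Units.ext (e.injective ?_)⟩
  calc e (algebraMap A S a) = algebraMap B T (algebraMap A B a) := by
        rw [e.commutes, IsScalarTower.algebraMap_apply A B T]
    _ = e v := congrArg Units.val hb

theorem mem_range_of_map_dvd_map_sub_C {D K : Type*} [CommRing D] [CommRing K] [Nontrivial K]
    {f : D →+* K} {p : D[X]} (hp : p.Monic) (hdeg : p.natDegree ≠ 0) {g : D[X]} {k : K}
    (h : p.map f ∣ g.map f - Polynomial.C k) : k ∈ Set.range f := by
  have hpf : (p.map f).Monic := hp.map f
  have hk : Polynomial.C k %ₘ p.map f = Polynomial.C k := by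
    refine (Polynomial.modByMonic_eq_self_iff hpf).mpr (Polynomial.degree_C_le.trans_lt ?_)
    rw [hp.degree_map, ← Polynomial.natDegree_pos_iff_degree_pos]
    exact Nat.pos_of_ne_zero hdeg
  have hmod : (g %ₘ p).map f = Polynomial.C k := by
    rw [← Polynomial.modByMonic_eq_zero_iff_dvd hpf, Polynomial.sub_modByMonic, hk,
      sub_eq_zero] at h
    rw [Polynomial.map_modByMonic f hp, h]
  exact ⟨(g %ₘ p).coeff 0, by rw [← Polynomial.coeff_map, hmod, Polynomial.coeff_C_zero]⟩

/-- The polynomial `p(t) - q u`, defining a variety of Danielewski type. It lives in `D[u][t]` with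
`t` as the outer variable, in which it is monic when `p` is monic and not constant. -/
noncomputable def danielewskiPoly {D : Type*} [CommRing D] (p : D[X]) (q : D) : D[X][Y] :=
  p.map Polynomial.C - Polynomial.C (Polynomial.C q * Polynomial.X)

/-- The substitution `u ↦ p(t)/q` from `D[u][t]` to `K[t]`, whose kernel is generated by
`danielewskiPoly p q`. Swapping the variables makes it an evaluation at an element of `K[t]`. -/
noncomputable def danielewskiEval {D : Type*} (K : Type*) [CommRing D] [Field K] [Algebra D K]
    (p : D[X]) (q : D) : D[X][Y] →+* K[X] :=
  ((Polynomial.evalRingHom (Polynomial.C (algebraMap D K q)⁻¹ * p.map (algebraMap D K))).comp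
    (Polynomial.Bivariate.swap : K[X][Y] ≃ₐ[K] K[X][Y]).toRingHom).comp
    (Polynomial.mapRingHom (Polynomial.mapRingHom (algebraMap D K)))

section Danielewski

variable {D : Type*} [CommRing D] {p : D[X]} {q : D}

theorem danielewskiPoly_monic (hp : p.Monic) (hdeg : p.natDegree ≠ 0) (q : D) :
    (danielewskiPoly p q).Monic := by
  nontriviality D
  refine (hp.map Polynomial.C).sub_of_left (Polynomial.degree_C_le.trans_lt ?_)
  rw [hp.degree_map, ← Polynomial.natDegree_pos_iff_degree_pos]
  exact Nat.pos_of_ne_zero hdeg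

theorem danielewskiPoly_C_mul (a : D) (p : D[X]) (q : D) :
    danielewskiPoly (Polynomial.C a * p) (a * q) =
      Polynomial.C (Polynomial.C a) * danielewskiPoly p q := by
  simp only [danielewskiPoly, Polynomial.map_mul, Polynomial.map_C, Polynomial.C_mul]
  ring

theorem danielewskiPoly_map {E : Type*} [CommRing E] (f : D →+* E) (p : D[X]) (q : D) :
    (danielewskiPoly p q).map (Polynomial.mapRingHom f) = danielewskiPoly (p.map f) (f q) := by
  simp only [danielewskiPoly, Polynomial.map_sub, Polynomial.map_map, Polynomial.map_C,
    Polynomial.coe_mapRingHom, Polynomial.map_mul, Polynomial.map_X, Polynomial.mapRingHom_comp_C]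

theorem eval_C_swap (a : D) (V : D[X][Y]) :
    (Polynomial.Bivariate.swap V).eval (Polynomial.C a) = V.map (Polynomial.evalRingHom a) := by
  suffices h : (Polynomial.evalRingHom (Polynomial.C a)).comp
      (Polynomial.Bivariate.swap : D[X][Y] ≃ₐ[D] D[X][Y]).toRingHom =
      Polynomial.mapRingHom (Polynomial.evalRingHom a) from RingHom.congr_fun h V
  ext <;> simp [Polynomial.Bivariate.swap_apply]

theorem swap_danielewskiPoly (p : D[X]) (q : D) :
    Polynomial.Bivariate.swap (danielewskiPoly p q) =
      Polynomial.C p - Polynomial.C (Polynomial.C q) * Polynomial.X := by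
  simp only [danielewskiPoly, map_sub, map_mul, Polynomial.Bivariate.swap_map_C,
    Polynomial.Bivariate.swap_C_C, Polynomial.Bivariate.swap_X]

variable {K : Type*} [Field K]

theorem danielewskiPoly_dvd_iff_eval_swap_eq_zero {p : K[X]} {q : K} (hq : q ≠ 0) {V : K[X][Y]} :
    danielewskiPoly p q ∣ V ↔
      (Polynomial.Bivariate.swap V).eval (Polynomial.C q⁻¹ * p) = 0 := by
  have hunit : IsUnit (Polynomial.C (Polynomial.C (-q)) : K[X][Y]) :=
    ((isUnit_iff_ne_zero.mpr (neg_ne_zero.mpr hq)).map Polynomial.C).map Polynomial.C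
  have hfactor : Polynomial.Bivariate.swap (danielewskiPoly p q) =
      Polynomial.C (Polynomial.C (-q)) *
        (Polynomial.X - Polynomial.C (Polynomial.C q⁻¹ * p)) := by
    have hp : p = Polynomial.C q * (Polynomial.C q⁻¹ * p) := by
      rw [← mul_assoc, ← Polynomial.C_mul, mul_inv_cancel₀ hq, Polynomial.C_1, one_mul]
    rw [swap_danielewskiPoly]
    conv_lhs => rw [hp]
    simp only [Polynomial.C_mul, Polynomial.C_neg]
    ring
  rw [← map_dvd_iff Polynomial.Bivariate.swap, hfactor, hunit.mul_left_dvd,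
    Polynomial.dvd_iff_isRoot, Polynomial.IsRoot.def]

variable [Algebra D K]

theorem danielewskiEval_C_C (p : D[X]) (q d : D) :
    danielewskiEval K p q (Polynomial.C (Polynomial.C d)) = Polynomial.C (algebraMap D K d) := by
  simp [danielewskiEval, Polynomial.Bivariate.swap_C_C]

theorem danielewskiEval_eq_zero_iff [FaithfulSMul D K] (hp : p.Monic) (hdeg : p.natDegree ≠ 0)
    (hq : q ≠ 0) {V : D[X][Y]} : danielewskiEval K p q V = 0 ↔ danielewskiPoly p q ∣ V := by
  have hinj : Function.Injective (algebraMap D K) := FaithfulSMul.algebraMap_injective D K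
  rw [← Polynomial.map_dvd_map (Polynomial.mapRingHom (algebraMap D K))
    (Polynomial.map_injective _ hinj) (danielewskiPoly_monic hp hdeg q), danielewskiPoly_map,
    danielewskiPoly_dvd_iff_eval_swap_eq_zero ((map_ne_zero_iff _ hinj).mpr hq)]
  rfl

theorem map_dvd_map_eval_zero_sub_danielewskiEval (p : D[X]) (q : D) (V : D[X][Y]) :
    p.map (algebraMap D K) ∣
      (V.map (Polynomial.evalRingHom 0)).map (algebraMap D K) - danielewskiEval K p q V := by
  set s : K[X] := Polynomial.C (algebraMap D K q)⁻¹ * p.map (algebraMap D K)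
  set V' : K[X][Y] := V.map (Polynomial.mapRingHom (algebraMap D K))
  have hzero : (Polynomial.Bivariate.swap V').eval 0 =
      (V.map (Polynomial.evalRingHom 0)).map (algebraMap D K) := by
    rw [← Polynomial.C_0, eval_C_swap, Polynomial.map_map, Polynomial.map_map]
    congr 1
    ext <;> simp
  have hs : s ∣ (Polynomial.Bivariate.swap V').eval s - (Polynomial.Bivariate.swap V').eval 0 := by
    simpa only [sub_zero] using Polynomial.sub_dvd_eval_sub s 0 (Polynomial.Bivariate.swap V')
  rw [← hzero, dvd_sub_comm]
  exact (Dvd.intro_left _ rfl).trans hs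

theorem unitsMap_quotient_danielewskiPoly_surjective_of_monic [IsDomain D] (hp : p.Monic)
    (hdeg : p.natDegree ≠ 0) (hq : q ≠ 0) :
    Function.Surjective
      (Units.map (algebraMap D (D[X][Y] ⧸ Ideal.span {danielewskiPoly p q})).toMonoidHom) := by
  let K := FractionRing D
  let φ : D[X][Y] →+* K[X] := danielewskiEval K p q
  have hker {V : D[X][Y]} : φ V = 0 ↔ V ∈ Ideal.span {danielewskiPoly p q} := by
    rw [danielewskiEval_eq_zero_iff hp hdeg hq, Ideal.mem_span_singleton]
  let ι : D[X][Y] ⧸ Ideal.span {danielewskiPoly p q} →+* K[X] :=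
    Ideal.Quotient.lift _ φ fun _ => hker.mpr
  have hι : Function.Injective ι :=
    RingHom.lift_injective_of_ker_le_ideal _ _ fun _ => hker.mp
  have hconst (d : D) :
      ι (algebraMap D (D[X][Y] ⧸ Ideal.span {danielewskiPoly p q}) d) =
        Polynomial.C (algebraMap D K d) :=
    (congrArg ι (Ideal.Quotient.mk_algebraMap D _ d).symm).trans (danielewskiEval_C_C p q d)
  have halg : Function.Injective
      (algebraMap D (D[X][Y] ⧸ Ideal.span {danielewskiPoly p q})) := fun a b hab =>
    IsFractionRing.injective D K (Polynomial.C_injective (by rw [← hconst, hab, hconst]))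
  refine unitsMap_surjective_of_forall_mem_range halg fun v => ?_
  obtain ⟨k, -, hk⟩ := Polynomial.isUnit_iff.mp (v.isUnit.map ι)
  obtain ⟨V, hV⟩ := Ideal.Quotient.mk_surjective v.val
  have hVk : φ V = Polynomial.C k := by rw [hk, ← hV]; rfl
  obtain ⟨d, hd⟩ := mem_range_of_map_dvd_map_sub_C hp hdeg
    (hVk ▸ map_dvd_map_eval_zero_sub_danielewskiEval p q V)
  exact ⟨d, hι ((hconst d).trans (by rw [hd, hk]))⟩

theorem unitsMap_quotient_danielewskiPoly_surjective [IsDomain D] (hp : IsUnit p.leadingCoeff)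
    (hdeg : p.natDegree ≠ 0) (hq : q ≠ 0) :
    Function.Surjective
      (Units.map (algebraMap D (D[X][Y] ⧸ Ideal.span {danielewskiPoly p q})).toMonoidHom) := by
  set a : Dˣ := hp.unit
  have hp' : Polynomial.C (a : D) * (a⁻¹ • p) = p := by
    rw [← Polynomial.smul_eq_C_mul, ← Units.smul_def, smul_inv_smul]
  have hspan : Ideal.span {danielewskiPoly p q} =
      Ideal.span {danielewskiPoly (a⁻¹ • p) (a⁻¹ * q)} := by
    conv_lhs => rw [← hp', ← a.mul_inv_cancel_left q, danielewskiPoly_C_mul]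
    exact Ideal.span_singleton_mul_left_unit ((a.isUnit.map Polynomial.C).map Polynomial.C) _
  rw [hspan]
  refine unitsMap_quotient_danielewskiPoly_surjective_of_monic
    (Polynomial.monic_of_isUnit_leadingCoeff_inv_smul hp) ?_ ?_
  · rwa [Polynomial.natDegree_smul_of_smul_regular _ (isSMulRegular_of_group _)]
  · exact a⁻¹.mul_right_eq_zero.not.mpr hq

end Danielewski

/-- The identification of `A[t, u₁, …, uₘ₊₁]` with `D[u₁][t]`, where `D = A[u₂, …, uₘ₊₁]`. -/
noncomputable def finSuccSuccEquiv (A : Type*) [CommSemiring A] (m : ℕ) :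
    MvPolynomial (Fin (m + 2)) A ≃ₐ[A] (MvPolynomial (Fin m) A)[X][Y] :=
  (finSuccEquiv A (m + 1)).trans (Polynomial.mapAlgEquiv (finSuccEquiv A m))

theorem finSuccSuccEquiv_aeval_sub_prod {A : Type*} [CommRing A] (p : A[X]) (m : ℕ) :
    finSuccSuccEquiv A m (Polynomial.aeval (X 0) p - ∏ j : Fin (m + 1), X j.succ) =
      danielewskiPoly (p.map C) (∏ j : Fin m, X j) := by
  have ht : finSuccSuccEquiv A m (X 0) = Polynomial.X := by
    simp only [finSuccSuccEquiv, AlgEquiv.trans_apply, finSuccEquiv_X_zero,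
      Polynomial.coe_mapAlgEquiv, Polynomial.map_X]
  have hu : finSuccSuccEquiv A m (X 1) = Polynomial.C Polynomial.X := by
    simp only [← Fin.succ_zero_eq_one, finSuccSuccEquiv, AlgEquiv.trans_apply,
      finSuccEquiv_X_succ, finSuccEquiv_X_zero, Polynomial.coe_mapAlgEquiv, Polynomial.map_C,
      RingHom.coe_coe]
  have hx (j : Fin m) :
      finSuccSuccEquiv A m (X j.succ.succ) = Polynomial.C (Polynomial.C (X j)) := by
    simp only [finSuccSuccEquiv, AlgEquiv.trans_apply, finSuccEquiv_X_succ,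
      Polynomial.coe_mapAlgEquiv, Polynomial.map_C, RingHom.coe_coe]
  have hp : Polynomial.aeval (Polynomial.X : (MvPolynomial (Fin m) A)[X][Y]) p =
      (p.map C).map Polynomial.C := by
    rw [Polynomial.aeval_X_left_eq_map, Polynomial.map_map]
    rfl
  rw [map_sub, ← Polynomial.aeval_algHom_apply, ht, hp, Fin.prod_univ_succ, map_mul, map_prod]
  simp only [Fin.succ_zero_eq_one, hu, hx, danielewskiPoly, map_mul, map_prod, mul_comm]

theorem unitsMap_algebraMap_mvPolynomial_surjective (A σ : Type*) [CommRing A] [IsReduced A] :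
    Function.Surjective (Units.map (algebraMap A (MvPolynomial σ A)).toMonoidHom) := by
  refine unitsMap_surjective_of_forall_mem_range (C_injective σ A) fun v => ?_
  obtain ⟨a, -, ha⟩ := isUnit_iff_eq_C_of_isReduced.mp v.isUnit
  exact ⟨a, ha.symm⟩

theorem units_of_coordinate_ring_are_constants_general {A : Type*} [CommRing A] [IsDomain A]
    {p : A[X]} (hp : IsUnit p.leadingCoeff) (hdeg : p.natDegree ≠ 0) {n : ℕ} (hn : 1 ≤ n) :
    Function.Surjective
      (Units.map (algebraMap A
        (MvPolynomial (Fin (n + 1)) A ⧸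
          Ideal.span {(Polynomial.aeval (X 0) p - ∏ j : Fin n, X j.succ :
            MvPolynomial (Fin (n + 1)) A)})).toMonoidHom) := by
  obtain ⟨m, rfl⟩ := Nat.exists_eq_add_of_le' hn
  let D := MvPolynomial (Fin m) A
  have hq : (∏ j : Fin m, X j : D) ≠ 0 := Finset.prod_ne_zero_iff.mpr fun j _ => X_ne_zero j
  have hlead : IsUnit (p.map (C : A →+* D)).leadingCoeff := by
    rw [Polynomial.leadingCoeff_map_of_injective (C_injective _ A)]
    exact hp.map C
  have hdeg : (p.map (C : A →+* D)).natDegree ≠ 0 := by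
    rwa [Polynomial.natDegree_map_eq_of_injective (C_injective _ A)]
  let e := Ideal.quotientEquivAlg _ (Ideal.span {danielewskiPoly (p.map C) (∏ j : Fin m, X j)})
    (finSuccSuccEquiv A m)
    (by rw [Ideal.map_span, Set.image_singleton, ← finSuccSuccEquiv_aeval_sub_prod]; rfl)
  exact unitsMap_algebraMap_surjective_of_algEquiv e
    (unitsMap_algebraMap_mvPolynomial_surjective A (Fin m))
    (unitsMap_quotient_danielewskiPoly_surjective hlead hdeg hq)

/-- The claim `k̄[X]^× = k̄^×` in the proof of Proposition 3.2 (Derenthal–Smeets–Wei):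
for `F` algebraically closed of characteristic `0`, `c ≠ 0` and `η₁, …, η_r` pairwise
distinct, every unit of `R = F[t, u₁, …, uₙ]/(c·∏ᵢ(t − ηᵢ) − u₁⋯uₙ)` comes from a
nonzero constant, i.e. `F^× → R^×` is surjective. -/
theorem units_of_coordinate_ring_are_constants
    (F : Type) [Field F] [IsAlgClosed F] [CharZero F] (c : F) (hc : c ≠ 0)
    (r n : ℕ) (hr : 1 ≤ r) (hn : 1 ≤ n) (η : Fin r → F) (hη : Function.Injective η) :
    Function.Surjective
      (Units.map (algebraMap F
        (MvPolynomial (Fin (n + 1)) F ⧸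
          Ideal.span {(C c * ∏ i : Fin r, (X 0 - C (η i)) - ∏ j : Fin n, X j.succ :
            MvPolynomial (Fin (n + 1)) F)})).toMonoidHom) := by
  set p : F[X] := Polynomial.C c * ∏ i, (Polynomial.X - Polynomial.C (η i)) with hp
  have hlead : p.leadingCoeff = c := by
    rw [hp, Polynomial.leadingCoeff_mul_monic (Polynomial.monic_prod_X_sub_C η _),
      Polynomial.leadingCoeff_C]
  have hdeg : p.natDegree = r := by
    rw [hp, Polynomial.natDegree_C_mul hc, Polynomial.natDegree_finsetProd_X_sub_C_eq_card,
      Finset.card_fin]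
  have haeval : Polynomial.aeval (X 0 : MvPolynomial (Fin (n + 1)) F) p =
      C c * ∏ i : Fin r, (X 0 - C (η i)) := by
    simp only [hp, map_mul, map_prod, map_sub, Polynomial.aeval_X, Polynomial.aeval_C,
      algebraMap_eq]
  rw [← haeval]
  exact units_of_coordinate_ring_are_constants_general (hlead ▸ hc.isUnit) (by lia) hn
end

section
/- Let F be an algebraically closed field of characteristic 0, let c ∈ F be nonzero, let r ≥ 1 and n ≥ 1 be integers, and let η₁, …, η_r ∈ F be pairwise distinct. Let R = F[t, u₁, …, u_n] / (c·∏_{i=1}^r (t − η_i) − u₁⋯u_n) and let R' be the localization of R away from the image of ∏_{i=1}^r (t − η_i) (equivalently, away from u₁⋯u_n). Then: (i) every unit of R' can be written as c'·∏_{i=1}^r (t − η_i)^{e_i} · ∏_{j=1}^n u_j^{m_j} with c' ∈ F^× and integers e_i, m_j; and (ii) the quotient group R'^× / F^× is a free abelian group of rank r + n − 1, generated by the classes of t − η₁, …, t − η_r, u₁, …, u_n subject to the single relation Σ_{i=1}^r [t − η_i] = Σ_{j=1}^n [u_j]. (Structure of k̄[U]^×/k̄^× in the proof of Proposition 3.2.)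 -/
open MvPolynomial

/-- The polynomial `c·∏ᵢ(t − ηᵢ) − u₁⋯uₙ` in `F[t, u₁, …, uₙ]`. -/
noncomputable def normFormPoly (F : Type) [Field F] (c : F) (r n : ℕ) (η : Fin r → F) :
    MvPolynomial (Fin (n + 1)) F :=
  C c * ∏ i : Fin r, (X 0 - C (η i)) - ∏ j : Fin n, X j.succ

/-- The coordinate ring `R = F[t, u₁, …, uₙ]/(c·∏ᵢ(t − ηᵢ) − u₁⋯uₙ)` of `X`. -/
noncomputable abbrev coordRing (F : Type) [Field F] (c : F) (r n : ℕ) (η : Fin r → F) :=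
  MvPolynomial (Fin (n + 1)) F ⧸ Ideal.span {normFormPoly F c r n η}

/-- The coordinate ring `R' = F[U]` of `U`, the localization of `R` away from
`∏ᵢ(t − ηᵢ)`. -/
noncomputable abbrev coordRingU (F : Type) [Field F] (c : F) (r n : ℕ) (η : Fin r → F) :=
  Localization.Away
    (Ideal.Quotient.mk (Ideal.span {normFormPoly F c r n η}) (∏ i : Fin r, (X 0 - C (η i))))

/-- The canonical map `F → R'`. -/
noncomputable def constMap (F : Type) [Field F] (c : F) (r n : ℕ) (η : Fin r → F) :
    F →+* coordRingU F c r n η :=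
  (algebraMap _ _).comp (algebraMap F (coordRing F c r n η))

/-- The image of `t − ηᵢ` in `R'`. -/
noncomputable def tFactor (F : Type) [Field F] (c : F) (r n : ℕ) (η : Fin r → F)
    (i : Fin r) : coordRingU F c r n η :=
  algebraMap (coordRing F c r n η) _
    (Ideal.Quotient.mk (Ideal.span {normFormPoly F c r n η})
      (X 0 - C (η i) : MvPolynomial (Fin (n + 1)) F))

/-- The image of `uⱼ` in `R'`. -/
noncomputable def uFactor (F : Type) [Field F] (c : F) (r n : ℕ) (η : Fin r → F)
    (j : Fin n) : coordRingU F c r n η :=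
  algebraMap (coordRing F c r n η) _
    (Ideal.Quotient.mk (Ideal.span {normFormPoly F c r n η})
      (X j.succ : MvPolynomial (Fin (n + 1)) F))

/-!
Solving `c·∏ᵢ(t − ηᵢ) = u₁⋯uₙ` for `uₙ` identifies `R'` with the localization of the polynomial
ring `F[t, u₁, …, uₙ₋₁]` away from the product of the pairwise non-associated primes `t − ηᵢ` and
`u₁, …, uₙ₋₁`. When a domain is localized away from such a product, every unit is uniquely a unit
of the domain times a product of integer powers of the primes, and the units of the polynomial
ring are the constants. Hence the `t − ηᵢ` together with `u₁, …, uₙ₋₁` form a basis of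
`R'^×/F^×`, in which `[uₙ] = ∑ᵢ[t − ηᵢ] − ∑_{j<n}[uⱼ]`.
-/

section PrimeFamily

variable {M N ι : Type*} [Fintype ι] {f : ι → M}

lemma exists_eq_unit_mul_prod_pow_of_dvd_prod_pow [CommMonoidWithZero M] [IsCancelMulZero M]
    (hf : ∀ i, Prime (f i)) {a : M} {k : ι → ℕ} (ha : a ∣ ∏ i, f i ^ k i) :
    ∃ (u : Mˣ) (e : ι → ℕ), a = u * ∏ i, f i ^ e i := by
  classical
  obtain ⟨b, hb⟩ := ha
  have hab : a * b = 1 * ∏ x : Σ i, Fin (k i), f x.1 := by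
    simp [← hb, Fintype.prod_sigma]
  obtain ⟨t, -, u, v, -, -, huv, rfl, -⟩ := mul_eq_mul_prime_prod (fun x _ => hf x.1) hab
  refine ⟨Units.mkOfMulEqOne u v huv.symm, fun i => Finset.card {x ∈ t | x.1 = i}, ?_⟩
  rw [← Finset.prod_fiberwise' t Sigma.fst f]
  simp

lemma ne_zero_of_dvd_prod_pow [CommMonoidWithZero M]
    (hd : Pairwise fun i j => ¬ f i ∣ f j) {j : ι} (hj : Prime (f j)) {k : ι → ℕ}
    (h : f j ∣ ∏ i, f i ^ k i) : k j ≠ 0 := by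
  obtain ⟨i, -, hi⟩ := (hj.dvd_finsetProd_iff _).mp h
  intro hk
  obtain rfl | hij := eq_or_ne j i
  · exact hj.not_isUnit (isUnit_of_dvd_one (by simpa [hk] using hi))
  · exact hd hij (hj.dvd_of_dvd_pow hi)

variable [CommMonoidWithZero M] [CommMonoid N] {φ : M →* N} {g : ι → Nˣ}

lemma zpow_exponent_nonpos_of_map_unit_mul_prod_zpow_eq_one (hφ : Function.Injective φ)
    (hf : ∀ i, Prime (f i)) (hd : Pairwise fun i j => ¬ f i ∣ f j)
    (hg : ∀ i, (g i : N) = φ (f i)) {u : Mˣ} {z : ι → ℤ}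
    (h : Units.map φ u * ∏ i, g i ^ z i = 1) (j : ι) : z j ≤ 0 := by
  by_contra! hj
  have hpos : Units.map φ u * ∏ i, g i ^ (z i).toNat = ∏ i, g i ^ (-z i).toNat := by
    have hsplit (i : ι) : g i ^ (z i).toNat = g i ^ z i * g i ^ (-z i).toNat := by
      rw [← zpow_natCast, ← zpow_natCast, ← zpow_add]
      congr 1
      lia
    rw [Finset.prod_congr rfl fun i _ => hsplit i, Finset.prod_mul_distrib, ← mul_assoc, h,
      one_mul]
  have hM : u * ∏ i, f i ^ (z i).toNat = ∏ i, f i ^ (-z i).toNat :=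
    hφ (by simpa [hg] using congrArg Units.val hpos)
  have hdvd : f j ∣ ∏ i, f i ^ (-z i).toNat := by
    have hpow : f j ∣ f j ^ (z j).toNat := dvd_pow_self _ (by lia)
    rw [← hM]
    exact (hpow.trans (Finset.dvd_prod_of_mem (fun i => f i ^ (z i).toNat)
      (Finset.mem_univ j))).mul_left _
  exact ne_zero_of_dvd_prod_pow hd (hf j) hdvd (by lia)

lemma eq_zero_of_map_unit_mul_prod_zpow_eq_one (hφ : Function.Injective φ)
    (hf : ∀ i, Prime (f i)) (hd : Pairwise fun i j => ¬ f i ∣ f j)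
    (hg : ∀ i, (g i : N) = φ (f i)) {u : Mˣ} {z : ι → ℤ}
    (h : Units.map φ u * ∏ i, g i ^ z i = 1) : z = 0 := by
  have hinv : Units.map φ u⁻¹ * ∏ i, g i ^ (-z) i = 1 := by
    simpa [mul_comm] using congrArg (·⁻¹) h
  ext j
  refine le_antisymm
    (zpow_exponent_nonpos_of_map_unit_mul_prod_zpow_eq_one hφ hf hd hg h j) ?_
  simpa using zpow_exponent_nonpos_of_map_unit_mul_prod_zpow_eq_one hφ hf hd hg hinv j

end PrimeFamily

lemma exists_unit_eq_map_mul_prod_zpow_of_isLocalizationAway {A B ι : Type*} [CommRing A]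
    [IsDomain A] [CommRing B] [Algebra A B] [Fintype ι] {f : ι → A}
    [IsLocalization.Away (∏ i, f i) B] (hf : ∀ i, Prime (f i)) {g : ι → Bˣ}
    (hg : ∀ i, (g i : B) = algebraMap A B (f i)) (w : Bˣ) :
    ∃ (u : Aˣ) (z : ι → ℤ), w = Units.map (algebraMap A B).toMonoidHom u * ∏ i, g i ^ z i := by
  obtain ⟨k, a, ha⟩ := IsLocalization.Away.surj (∏ i, f i) (w : B)
  have ha_unit : IsUnit (algebraMap A B a) := by
    rw [← ha]
    exact w.isUnit.mul (IsLocalization.Away.algebraMap_pow_isUnit _ k)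
  obtain ⟨l, hl⟩ := (IsLocalization.Away.algebraMap_isUnit_iff (∏ i, f i)).mp ha_unit
  rw [← Finset.prod_pow] at hl
  obtain ⟨u, e, rfl⟩ := exists_eq_unit_mul_prod_pow_of_dvd_prod_pow hf hl
  have hw : w * ∏ i, g i ^ k = Units.map (algebraMap A B).toMonoidHom u * ∏ i, g i ^ e i := by
    ext
    simpa [hg, Finset.prod_pow] using ha
  refine ⟨u, fun i => e i - k, ?_⟩
  simp only [zpow_sub, zpow_natCast, Finset.prod_mul_distrib, Finset.prod_inv_distrib]
  rw [← mul_assoc, ← hw, mul_inv_cancel_right]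

lemma prod_zpow_mul_prod_zpow_of_mul_prod_eq_prod {G ι : Type*} [CommGroup G] [Fintype ι] {N : ℕ}
    {k : G} {x : ι → G} {y : Fin (N + 1) → G} (h : k * ∏ i, x i = ∏ j, y j)
    (e : ι → ℤ) (m : Fin (N + 1) → ℤ) :
    (∏ i, x i ^ e i) * ∏ j, y j ^ m j =
      k ^ m (Fin.last N) * ((∏ i, x i ^ (e i + m (Fin.last N))) *
        ∏ j : Fin N, y j.castSucc ^ (m j.castSucc - m (Fin.last N))) := by
  have hlast : y (Fin.last N) = k * (∏ i, x i) * (∏ j : Fin N, y j.castSucc)⁻¹ := by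
    rw [h, Fin.prod_univ_castSucc, mul_right_comm, mul_inv_cancel, one_mul]
  rw [Fin.prod_univ_castSucc, hlast]
  simp only [zpow_add, zpow_sub, mul_zpow, inv_zpow, Finset.prod_mul_distrib,
    Finset.prod_inv_distrib, Finset.prod_zpow]
  simp only [mul_assoc, mul_left_comm, mul_comm]

section LinearPolynomials

variable {σ A : Type*} [CommRing A]

lemma prime_X_sub_C [IsDomain A] (i : σ) (a : A) : Prime (X i - C a : MvPolynomial σ A) := by
  let translation : MvPolynomial σ A ≃ₐ[A] MvPolynomial σ A :=
    AlgEquiv.ofAlgHom (aeval fun j => X j - C a) (aeval fun j => X j + C a)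
      (by ext; simp) (by ext; simp)
  have hX : translation (X i) = X i - C a := by simp [translation]
  rw [← hX, MulEquiv.prime_iff]
  exact X_prime

lemma X_sub_C_dvd_X_sub_C_iff [Nontrivial A] {i j : σ} {a b : A} :
    (X i - C a : MvPolynomial σ A) ∣ X j - C b ↔ i = j ∧ a = b := by
  classical
  refine ⟨fun h => ?_, by rintro ⟨rfl, rfl⟩; rfl⟩
  have heval := map_dvd (eval (Function.update (fun _ => b + 1) i a)) h
  obtain rfl | hij := eq_or_ne i j
  · exact ⟨rfl, by simpa [sub_eq_zero] using heval⟩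
  · simp [Function.update_of_ne hij.symm] at heval

end LinearPolynomials

lemma exists_map_C_eq_unit {σ A : Type*} [CommRing A] [IsReduced A] (u : (MvPolynomial σ A)ˣ) :
    ∃ a : Aˣ, Units.map (C : A →+* MvPolynomial σ A).toMonoidHom a = u := by
  obtain ⟨a, ha, hu⟩ := isUnit_iff_eq_C_of_isReduced.mp u.isUnit
  exact ⟨ha.unit, Units.ext hu.symm⟩

namespace coordRingU

variable {F : Type} [Field F] {c : F} {r n N : ℕ} {η : Fin r → F}

variable (F c r n η) in
/-- The canonical map `F[t, u₁, …, uₙ] → R'`. -/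
noncomputable def mk : MvPolynomial (Fin (n + 1)) F →ₐ[F] coordRingU F c r n η :=
  (IsScalarTower.toAlgHom F (coordRing F c r n η) (coordRingU F c r n η)).comp
    (Ideal.Quotient.mkₐ F (Ideal.span {normFormPoly F c r n η}))

lemma mk_normFormPoly : mk F c r n η (normFormPoly F c r n η) = 0 := by
  have h : Ideal.Quotient.mkₐ F (Ideal.span {normFormPoly F c r n η})
      (normFormPoly F c r n η) = 0 :=
    Ideal.Quotient.eq_zero_iff_mem.mpr (Ideal.mem_span_singleton_self _)
  rw [mk, AlgHom.comp_apply, h, map_zero]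

lemma mk_prod_X_sub_C :
    mk F c r n η (∏ i : Fin r, (X 0 - C (η i))) = ∏ i, tFactor F c r n η i :=
  map_prod (mk F c r n η) _ _

lemma isUnit_tFactor (i : Fin r) : IsUnit (tFactor F c r n η i) := by
  have hprod : IsUnit (∏ i, tFactor F c r n η i) := by
    rw [← mk_prod_X_sub_C]
    exact IsLocalization.Away.algebraMap_isUnit (Ideal.Quotient.mk
      (Ideal.span {normFormPoly F c r n η}) (∏ i : Fin r, (X 0 - C (η i))))
  exact isUnit_of_dvd_unit (Finset.dvd_prod_of_mem _ (Finset.mem_univ i)) hprod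

lemma constMap_mul_prod_tFactor :
    constMap F c r n η c * ∏ i, tFactor F c r n η i = ∏ j, uFactor F c r n η j := by
  have h : mk F c r n η (C c * ∏ i : Fin r, (X 0 - C (η i)) - ∏ j : Fin n, X j.succ) = 0 :=
    mk_normFormPoly
  rw [map_sub, sub_eq_zero, map_mul, mk_prod_X_sub_C] at h
  exact h.trans (map_prod _ _ _)

lemma isUnit_uFactor (hc : c ≠ 0) (j : Fin n) : IsUnit (uFactor F c r n η j) := by
  have hprod : IsUnit (∏ j, uFactor F c r n η j) := by
    rw [← constMap_mul_prod_tFactor]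
    exact (hc.isUnit.map _).mul (IsUnit.prod_univ_iff.mpr isUnit_tFactor)
  exact isUnit_of_dvd_unit (Finset.dvd_prod_of_mem _ (Finset.mem_univ j)) hprod

section UniversalProperty

variable {B : Type*} [CommRing B] [Algebra F B]

lemma exists_lift (θ : MvPolynomial (Fin (n + 1)) F →ₐ[F] B)
    (hθ : θ (normFormPoly F c r n η) = 0) (hunit : IsUnit (θ (∏ i : Fin r, (X 0 - C (η i))))) :
    ∃ φ : coordRingU F c r n η →ₐ[F] B, φ.comp (mk F c r n η) = θ := by
  have hI : ∀ p ∈ Ideal.span {normFormPoly F c r n η}, θ p = 0 := by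
    intro p hp
    obtain ⟨q, rfl⟩ := Ideal.mem_span_singleton.mp hp
    rw [map_mul, hθ, zero_mul]
  let θR : coordRing F c r n η →ₐ[F] B := Ideal.Quotient.liftₐ _ θ hI
  let P : coordRing F c r n η := Ideal.Quotient.mk _ (∏ i : Fin r, (X 0 - C (η i)))
  have hP : IsUnit (θR P) := hunit
  exact ⟨IsLocalization.Away.liftAlgHom (S := coordRingU F c r n η) P hP,
    AlgHom.ext fun p => IsLocalization.Away.lift_eq P hP (Ideal.Quotient.mk _ p)⟩

lemma algHom_ext {φ ψ : coordRingU F c r n η →ₐ[F] B}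
    (h : φ.comp (mk F c r n η) = ψ.comp (mk F c r n η)) : φ = ψ := by
  apply AlgHom.coe_ringHom_injective
  apply IsLocalization.ringHom_ext (R := coordRing F c r n η) (Submonoid.powers
    (Ideal.Quotient.mk (Ideal.span {normFormPoly F c r n η}) (∏ i : Fin r, (X 0 - C (η i)))))
  apply Ideal.Quotient.ringHom_ext
  exact congrArg AlgHom.toRingHom h

end UniversalProperty

section Chart

variable (F r N η) in
/-- The primes `t - ηᵢ` and `uⱼ`, `j ≤ N`, of `F[t, u₁, …, u_N]`. -/
noncomputable def chartFactor : Fin r ⊕ Fin N → MvPolynomial (Fin (N + 1)) F :=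
  Sum.elim (fun i => X 0 - C (η i)) fun j => X j.succ

lemma chartFactor_eq_X_sub_C (x : Fin r ⊕ Fin N) :
    chartFactor F r N η x =
      X (Sum.elim (fun _ => 0) Fin.succ x) - C (Sum.elim η (fun _ => 0) x) := by
  cases x <;> simp [chartFactor]

lemma prime_chartFactor (x : Fin r ⊕ Fin N) : Prime (chartFactor F r N η x) := by
  rw [chartFactor_eq_X_sub_C]
  exact prime_X_sub_C _ _

lemma pairwise_not_chartFactor_dvd (hη : Function.Injective η) :
    Pairwise fun x y => ¬ chartFactor F r N η x ∣ chartFactor F r N η y := by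
  intro x y hxy hdvd
  rw [chartFactor_eq_X_sub_C, chartFactor_eq_X_sub_C, X_sub_C_dvd_X_sub_C_iff] at hdvd
  rcases x with i | j <;> rcases y with i' | j' <;>
    simp_all [hη.eq_iff, Fin.succ_ne_zero, (Fin.succ_ne_zero _).symm]

variable (F c r N η) in
/-- The map `F[t, u₁, …, u_N] → R'` for `n = N + 1`, omitting the last coordinate `u_{N+1}`. -/
noncomputable def chartMap : MvPolynomial (Fin (N + 1)) F →ₐ[F] coordRingU F c r (N + 1) η :=
  (mk F c r (N + 1) η).comp (rename Fin.castSucc)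

lemma chartMap_X (k : Fin (N + 1)) :
    chartMap F c r N η (X k) = mk F c r (N + 1) η (X k.castSucc) := by
  rw [chartMap, AlgHom.comp_apply, rename_X]

lemma chartMap_chartFactor_inl (i : Fin r) :
    chartMap F c r N η (chartFactor F r N η (.inl i)) = tFactor F c r (N + 1) η i := by
  rw [chartFactor, Sum.elim_inl, chartMap, AlgHom.comp_apply, map_sub, rename_X, rename_C]
  rfl

lemma chartMap_chartFactor_inr (j : Fin N) :
    chartMap F c r N η (chartFactor F r N η (.inr j)) = uFactor F c r (N + 1) η j.castSucc :=
  chartMap_X j.succ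

lemma isUnit_chartMap_chartFactor (hc : c ≠ 0) (x : Fin r ⊕ Fin N) :
    IsUnit (chartMap F c r N η (chartFactor F r N η x)) := by
  rcases x with i | j
  · rw [chartMap_chartFactor_inl]
    exact isUnit_tFactor i
  · rw [chartMap_chartFactor_inr]
    exact isUnit_uFactor hc j.castSucc

section UniversalProperty

variable {B : Type*} [CommRing B] [Algebra F B]

lemma exists_comp_chartMap_eq (χ : MvPolynomial (Fin (N + 1)) F →ₐ[F] B)
    (hχ : ∀ x, IsUnit (χ (chartFactor F r N η x))) :
    ∃ φ : coordRingU F c r (N + 1) η →ₐ[F] B, φ.comp (chartMap F c r N η) = χ := by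
  have hP : IsUnit (∏ i : Fin r, χ (X 0 - C (η i))) :=
    IsUnit.prod_univ_iff.mpr fun i => hχ (.inl i)
  have hQ : IsUnit (∏ j : Fin N, χ (X j.succ)) :=
    IsUnit.prod_univ_iff.mpr fun j => hχ (.inr j)
  let lastCoord : B := χ (C c) * (∏ i : Fin r, χ (X 0 - C (η i))) * ↑hQ.unit⁻¹
  let θ : MvPolynomial (Fin (N + 1 + 1)) F →ₐ[F] B :=
    aeval (Fin.snoc (fun k => χ (X k)) lastCoord)
  have hθ_cast (k : Fin (N + 1)) : θ (X k.castSucc) = χ (X k) := by simp [θ]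
  have hθ_last : θ (X (Fin.last N).succ) = lastCoord := by
    rw [Fin.succ_last, aeval_X, Fin.snoc_last]
  have hθ_C (a : F) : θ (C a) = χ (C a) := by simp [← algebraMap_eq]
  have hθ_prod : θ (∏ i : Fin r, (X 0 - C (η i))) = ∏ i : Fin r, χ (X 0 - C (η i)) := by
    simp only [map_prod, map_sub, hθ_C, ← hθ_cast, Fin.castSucc_zero]
  have hsolve : (∏ j : Fin N, χ (X j.succ)) * lastCoord =
      χ (C c) * ∏ i : Fin r, χ (X 0 - C (η i)) := by
    rw [mul_comm, mul_assoc, hQ.val_inv_mul, mul_one]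
  have hθ_norm : θ (normFormPoly F c r (N + 1) η) = 0 := by
    have hθ_succ (j : Fin N) : θ (X j.castSucc.succ) = χ (X j.succ) := hθ_cast j.succ
    rw [normFormPoly, map_sub, map_mul, hθ_prod, hθ_C, map_prod, Fin.prod_univ_castSucc,
      hθ_last, Finset.prod_congr rfl fun j _ => hθ_succ j, hsolve, sub_self]
  obtain ⟨φ, hφ⟩ := exists_lift θ hθ_norm (hθ_prod ▸ hP)
  refine ⟨φ, MvPolynomial.algHom_ext fun k => ?_⟩
  rw [AlgHom.comp_apply, chartMap_X, ← hθ_cast, ← hφ, AlgHom.comp_apply]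

lemma algHom_ext_of_comp_chartMap (hc : c ≠ 0) {φ ψ : coordRingU F c r (N + 1) η →ₐ[F] B}
    (h : φ.comp (chartMap F c r N η) = ψ.comp (chartMap F c r N η)) : φ = ψ := by
  have happly (p) : φ (chartMap F c r N η p) = ψ (chartMap F c r N η p) := DFunLike.congr_fun h p
  have ht (i : Fin r) : φ (tFactor F c r (N + 1) η i) = ψ (tFactor F c r (N + 1) η i) := by
    rw [← chartMap_chartFactor_inl, happly]
  have hu (j : Fin N) : φ (uFactor F c r (N + 1) η j.castSucc) =
      ψ (uFactor F c r (N + 1) η j.castSucc) := by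
    rw [← chartMap_chartFactor_inr, happly]
  have hconst : φ (constMap F c r (N + 1) η c) = ψ (constMap F c r (N + 1) η c) :=
    (φ.commutes c).trans (ψ.commutes c).symm
  have hlast : φ (uFactor F c r (N + 1) η (Fin.last N)) =
      ψ (uFactor F c r (N + 1) η (Fin.last N)) := by
    have hQ : IsUnit (∏ j : Fin N, ψ (uFactor F c r (N + 1) η j.castSucc)) :=
      IsUnit.prod_univ_iff.mpr fun j => (isUnit_uFactor hc j.castSucc).map ψ
    have hφ := congrArg φ (constMap_mul_prod_tFactor (c := c) (n := N + 1) (η := η))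
    have hψ := congrArg ψ (constMap_mul_prod_tFactor (c := c) (n := N + 1) (η := η))
    simp only [map_mul, map_prod, Fin.prod_univ_castSucc, ht, hu, hconst] at hφ hψ
    exact hQ.mul_left_cancel (hφ.symm.trans hψ)
  refine algHom_ext (MvPolynomial.algHom_ext fun k => ?_)
  induction k using Fin.lastCases with
  | last => exact hlast
  | cast k => simpa only [chartMap_X, AlgHom.comp_apply] using happly (X k)

end UniversalProperty

variable (F c r N η) in
/-- The `F[t, u₁, …, u_N]`-algebra structure on `R'` given by `chartMap`. -/
noncomputable abbrev chartAlgebra :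
    Algebra (MvPolynomial (Fin (N + 1)) F) (coordRingU F c r (N + 1) η) :=
  (chartMap F c r N η).toAlgebra

attribute [local instance] chartAlgebra

lemma isLocalizationAway_prod_chartFactor (hc : c ≠ 0) :
    IsLocalization.Away (∏ x, chartFactor F r N η x) (coordRingU F c r (N + 1) η) := by
  let A := MvPolynomial (Fin (N + 1)) F
  let D : A := ∏ x, chartFactor F r N η x
  let L := Localization.Away D
  have hD : IsUnit (chartMap F c r N η D) := by
    rw [map_prod (chartMap F c r N η)]
    exact IsUnit.prod_univ_iff.mpr (isUnit_chartMap_chartFactor hc)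
  let toChart : L →ₐ[F] coordRingU F c r (N + 1) η := IsLocalization.Away.liftAlgHom D hD
  have htoChart (p : A) : toChart (algebraMap A L p) = chartMap F c r N η p :=
    IsLocalization.Away.lift_eq D hD p
  obtain ⟨ofChart, hofChart⟩ := exists_comp_chartMap_eq (c := c)
    (IsScalarTower.toAlgHom F A L) fun x => IsLocalization.Away.isUnit_of_dvd D
      (Finset.dvd_prod_of_mem (chartFactor F r N η) (Finset.mem_univ x))
  have hofChart_apply (p : A) : ofChart (chartMap F c r N η p) = algebraMap A L p :=
    DFunLike.congr_fun hofChart p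
  have hright : toChart.comp ofChart = .id F _ := by
    refine algHom_ext_of_comp_chartMap hc (AlgHom.ext fun p => ?_)
    simp [hofChart_apply, htoChart]
  have hleft : ofChart.comp toChart = .id F _ := by
    apply AlgHom.coe_ringHom_injective
    refine IsLocalization.ringHom_ext (Submonoid.powers D) (RingHom.ext fun p => ?_)
    simp [hofChart_apply, htoChart]
  exact IsLocalization.isLocalization_of_algEquiv (Submonoid.powers D)
    (AlgEquiv.ofRingEquiv (f := (AlgEquiv.ofAlgHom toChart ofChart hright hleft).toRingEquiv)
      htoChart)

lemma chartMap_injective (hc : c ≠ 0) : Function.Injective (chartMap F c r N η) := by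
  have := isLocalizationAway_prod_chartFactor (r := r) (N := N) (η := η) hc
  refine IsLocalization.injective (coordRingU F c r (N + 1) η)
    (M := Submonoid.powers (∏ x, chartFactor F r N η x))
    (powers_le_nonZeroDivisors_of_noZeroDivisors ?_)
  exact Finset.prod_ne_zero_iff.mpr fun x _ => (prime_chartFactor x).ne_zero

end Chart

variable (F c r n η) in
/-- The constants `F^× → R'^×`. -/
noncomputable abbrev constUnits : Fˣ →* (coordRingU F c r n η)ˣ :=
  Units.map (constMap F c r n η).toMonoidHom

/-- `t - ηᵢ` as an element of `R'^×`. -/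
noncomputable def tUnit (i : Fin r) : (coordRingU F c r n η)ˣ :=
  (isUnit_tFactor i).unit

/-- `uⱼ` as an element of `R'^×`. -/
noncomputable def uUnit (hc : c ≠ 0) (j : Fin n) : (coordRingU F c r n η)ˣ :=
  (isUnit_uFactor hc j).unit

lemma constUnits_mul_prod_tUnit (hc : c ≠ 0) :
    constUnits F c r n η (Units.mk0 c hc) * ∏ i, tUnit i = ∏ j, uUnit hc j := by
  ext
  simpa [tUnit, uUnit] using constMap_mul_prod_tFactor

/-- The primes `chartFactor` as units of `R'`: all `t - ηᵢ`, and all `uⱼ` but the last. -/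
noncomputable def chartUnit (hc : c ≠ 0) : Fin r ⊕ Fin N → (coordRingU F c r (N + 1) η)ˣ :=
  Sum.elim tUnit fun j => uUnit hc j.castSucc

lemma coe_chartUnit (hc : c ≠ 0) (x : Fin r ⊕ Fin N) :
    ((chartUnit hc x : (coordRingU F c r (N + 1) η)ˣ) : coordRingU F c r (N + 1) η) =
      chartMap F c r N η (chartFactor F r N η x) := by
  rcases x with i | j
  · exact (chartMap_chartFactor_inl i).symm
  · exact (chartMap_chartFactor_inr j).symm

lemma prod_chartUnit_zpow (hc : c ≠ 0) (z : Fin r ⊕ Fin N → ℤ) :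
    ∏ x, (chartUnit hc x : (coordRingU F c r (N + 1) η)ˣ) ^ z x =
      (∏ i, tUnit i ^ z (.inl i)) * ∏ j : Fin N, uUnit hc j.castSucc ^ z (.inr j) :=
  Fintype.prod_sum_type _

lemma map_chartMap_map_C (a : Fˣ) :
    Units.map (chartMap F c r N η).toRingHom.toMonoidHom
      (Units.map (C : F →+* MvPolynomial (Fin (N + 1)) F).toMonoidHom a) =
      constUnits F c r (N + 1) η a :=
  Units.ext ((chartMap F c r N η).commutes a)

attribute [local instance] chartAlgebra in
lemma exists_eq_constUnits_mul_prod_zpow (hc : c ≠ 0) (w : (coordRingU F c r (N + 1) η)ˣ) :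
    ∃ (a : Fˣ) (e : Fin r → ℤ) (m : Fin (N + 1) → ℤ),
      w = constUnits F c r (N + 1) η a * (∏ i, tUnit i ^ e i) * ∏ j, uUnit hc j ^ m j := by
  have := isLocalizationAway_prod_chartFactor (r := r) (N := N) (η := η) hc
  obtain ⟨p, z, rfl⟩ := exists_unit_eq_map_mul_prod_zpow_of_isLocalizationAway
    (prime_chartFactor (η := η)) (coe_chartUnit hc) w
  obtain ⟨a, rfl⟩ := exists_map_C_eq_unit p
  refine ⟨a, fun i => z (.inl i), Fin.snoc (fun j => z (.inr j)) 0, ?_⟩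
  rw [prod_chartUnit_zpow, ← mul_assoc, ← map_chartMap_map_C, Fin.prod_univ_castSucc]
  simp only [Fin.snoc_castSucc, Fin.snoc_last, zpow_zero, mul_one]
  rfl

lemma exists_exponents_eq_of_constUnits_mul_prod_zpow_eq_one (hc : c ≠ 0)
    (hη : Function.Injective η) {a : Fˣ} {e : Fin r → ℤ} {m : Fin (N + 1) → ℤ}
    (h : constUnits F c r (N + 1) η a * (∏ i, tUnit i ^ e i) * ∏ j, uUnit hc j ^ m j = 1) :
    ∃ s : ℤ, (∀ i, e i = s) ∧ ∀ j, m j = -s := by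
  set s := m (Fin.last N) with hs
  let z : Fin r ⊕ Fin N → ℤ := Sum.elim (fun i => e i + s) fun j => m j.castSucc - s
  have hchart : Units.map (chartMap F c r N η).toRingHom.toMonoidHom
      (Units.map (C : F →+* MvPolynomial (Fin (N + 1)) F).toMonoidHom (a * Units.mk0 c hc ^ s)) *
      ∏ x, chartUnit hc x ^ z x = 1 := by
    rw [mul_assoc, prod_zpow_mul_prod_zpow_of_mul_prod_eq_prod (constUnits_mul_prod_tUnit hc)] at h
    rw [map_chartMap_map_C, prod_chartUnit_zpow, map_mul, map_zpow, mul_assoc]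
    exact h
  have hz : z = 0 := eq_zero_of_map_unit_mul_prod_zpow_eq_one (chartMap_injective hc)
    prime_chartFactor (pairwise_not_chartFactor_dvd hη) (coe_chartUnit hc) hchart
  refine ⟨-s, fun i => eq_neg_of_add_eq_zero_left (congrFun hz (.inl i)), fun j => ?_⟩
  rw [neg_neg]
  induction j using Fin.lastCases with
  | last => exact hs.symm
  | cast j => exact sub_eq_zero.mp (congrFun hz (.inr j))

end coordRingU

theorem units_of_coordinate_ring_of_U_general
    {F : Type} [Field F] {c : F} (hc : c ≠ 0) {r n : ℕ} (hn : 1 ≤ n) {η : Fin r → F}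
    (hη : Function.Injective η) :
    ∃ (hT : ∀ i, IsUnit (tFactor F c r n η i)) (hU : ∀ j, IsUnit (uFactor F c r n η j)),
      (∀ w : (coordRingU F c r n η)ˣ,
        ∃ (c' : Fˣ) (e : Fin r → ℤ) (m : Fin n → ℤ),
          w = Units.map (constMap F c r n η).toMonoidHom c' *
            (∏ i, (hT i).unit ^ e i) * ∏ j, (hU j).unit ^ m j) ∧
      (∀ (c' : Fˣ) (e : Fin r → ℤ) (m : Fin n → ℤ),
        Units.map (constMap F c r n η).toMonoidHom c' *
            (∏ i, (hT i).unit ^ e i) * ∏ j, (hU j).unit ^ m j = 1 →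
          ∃ s : ℤ, (∀ i, e i = s) ∧ ∀ j, m j = -s) := by
  obtain ⟨N, rfl⟩ := Nat.exists_eq_add_of_le' hn
  exact ⟨coordRingU.isUnit_tFactor, coordRingU.isUnit_uFactor hc,
    coordRingU.exists_eq_constUnits_mul_prod_zpow hc,
    fun _ _ _ => coordRingU.exists_exponents_eq_of_constUnits_mul_prod_zpow_eq_one hc hη⟩

/-- Structure of `k̄[U]^×/k̄^×` in the proof of Proposition 3.2 (Derenthal–Smeets–Wei):
the elements `t − ηᵢ` and `uⱼ` are units of `R'`; every unit of `R'` is of the form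
`c'·∏ᵢ(t − ηᵢ)^{eᵢ}·∏ⱼ uⱼ^{mⱼ}` with `c' ∈ F^×`, `eᵢ, mⱼ ∈ ℤ`; and such a product is
a (nonzero) constant exactly along the single relation `Σᵢ[t − ηᵢ] = Σⱼ[uⱼ]`, so that
`R'^×/F^×` is free abelian of rank `r + n − 1` on these classes. -/
theorem units_of_coordinate_ring_of_U
    (F : Type) [Field F] [IsAlgClosed F] [CharZero F] (c : F) (hc : c ≠ 0)
    (r n : ℕ) (hr : 1 ≤ r) (hn : 1 ≤ n) (η : Fin r → F) (hη : Function.Injective η) :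
    ∃ (hT : ∀ i, IsUnit (tFactor F c r n η i)) (hU : ∀ j, IsUnit (uFactor F c r n η j)),
      (∀ w : (coordRingU F c r n η)ˣ,
        ∃ (c' : Fˣ) (e : Fin r → ℤ) (m : Fin n → ℤ),
          w = Units.map (constMap F c r n η).toMonoidHom c' *
            (∏ i, (hT i).unit ^ e i) * ∏ j, (hU j).unit ^ m j) ∧
      (∀ (c' : Fˣ) (e : Fin r → ℤ) (m : Fin n → ℤ),
        Units.map (constMap F c r n η).toMonoidHom c' *
            (∏ i, (hT i).unit ^ e i) * ∏ j, (hU j).unit ^ m j = 1 →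
          ∃ s : ℤ, (∀ i, e i = s) ∧ ∀ j, m j = -s) := by
  exact units_of_coordinate_ring_of_U_general hc hn hη
end

section
/- Let k be a field of characteristic 0, let a ∈ k be a non-square, let K/k be a finite field extension containing α with α² = a, and set L = k(α) ⊆ K. Let σ denote the nontrivial element of Gal(L/k) and let ρ ∈ L be nonzero. For every commutative k-algebra B, write N₁ : (K ⊗_k B)^× → (L ⊗_k B)^× for the algebra norm of K ⊗_k B over L ⊗_k B and N₂ : (K ⊗_k B)^× → B^× for the algebra norm of K ⊗_k B over B, and let σ_B = σ ⊗ id_B act on L ⊗_k B. Then the map (t, x₁, x₂) ↦ (t, x₂⁻¹, x₁x₂⁻¹) is a bijection from the set {(t, x₁, x₂) ∈ B × (K ⊗_k B)^× × (K ⊗_k B)^× : (1⊗t) − (α⊗1) = (ρ⊗1)·N₁(x₁)·σ_B(N₁(x₂)) in L ⊗_k B} onto the set {(t, w, y) ∈ B × (K ⊗_k B)^× × (K ⊗_k B)^× : N₂(w)·((1⊗t) − (α⊗1)) = (ρ⊗1)·N₁(y) in L ⊗_k B}, with inverse (t, w, y) ↦ (t, w⁻¹y, w⁻¹). (The isomorphism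 T_U ≅ Y in the split case of the proof of Proposition 4.1.) -/
/-!
Over `L ⊗ B` the norm of `L/k` is still `z ↦ z · σ(z)`, so transitivity of norms in the free tower
`B → L ⊗ B → K ⊗ B` gives `N₂ = N₁ · σ(N₁)`. Writing `w = x₂⁻¹` and `y = x₁ x₂⁻¹`, the factor
`N₁(x₂⁻¹) · σ(N₁(x₂⁻¹))` is a unit, and multiplying the equation of `T_U` by it gives that of `Y`.
-/

open IntermediateField TensorProduct

attribute [local instance] Algebra.TensorProduct.rightAlgebra

/-- The algebra norm of `K ⊗_k B` over `L ⊗_k B`, for an intermediate field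
`L` of `K/k` and a commutative `k`-algebra `B`; the `(L ⊗_k B)`-algebra structure
on `K ⊗_k B` is induced by the inclusion `L → K`. -/
noncomputable def normTensor (k K : Type) [Field k] [Field K] [Algebra k K]
    (L : IntermediateField k K) (B : Type) [CommRing B] [Algebra k B] :
    (K ⊗[k] B) →* (↥L ⊗[k] B) :=
  @Algebra.norm (↥L ⊗[k] B) (K ⊗[k] B) _ _
    ((Algebra.TensorProduct.map L.val (AlgHom.id k B)).toRingHom).toAlgebra

section Substitution

/-- The substitution `(t, x₁, x₂) ↦ (t, x₂⁻¹, x₁x₂⁻¹)`, with inverse `(t, w, y) ↦ (t, w⁻¹y, w⁻¹)`,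
for variables `x₁, x₂` in a commutative group and a parameter `t`. -/
def torsorSubstitution (T G : Type*) [CommGroup G] : T × G × G ≃ T × G × G where
  toFun p := (p.1, p.2.2⁻¹, p.2.1 * p.2.2⁻¹)
  invFun p := (p.1, p.2.1⁻¹ * p.2.2, p.2.1⁻¹)
  left_inv _ := by simp
  right_inv _ := by simp

variable {T G M : Type*} [CommGroup G] [CommMonoid M]

theorem map_inv_mul_map_inv_mul_eq_iff (N N' : G →* M) (s c : M) (x₁ x₂ : G) :
    N x₂⁻¹ * N' x₂⁻¹ * s = c * N (x₁ * x₂⁻¹) ↔ s = c * N x₁ * N' x₂ := by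
  have hunit : IsUnit (N x₂⁻¹ * N' x₂⁻¹) := ((Group.isUnit _).map N).mul ((Group.isUnit _).map N')
  have hN' : N' x₂⁻¹ * N' x₂ = 1 := by rw [← map_mul, inv_mul_cancel, map_one]
  have hrhs : N x₂⁻¹ * N' x₂⁻¹ * (c * N x₁ * N' x₂) = c * N (x₁ * x₂⁻¹) :=
    calc
      _ = c * (N x₁ * N x₂⁻¹) * (N' x₂⁻¹ * N' x₂) := by ac_rfl
      _ = c * N (x₁ * x₂⁻¹) := by rw [hN', mul_one, map_mul]
  rw [← hrhs, hunit.mul_right_inj]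

theorem bijOn_torsorSubstitution (N N' : G →* M) (s : T → M) (c : M) :
    Set.BijOn (torsorSubstitution T G)
      {p | s p.1 = c * N p.2.1 * N' p.2.2}
      {p | N p.2.1 * N' p.2.1 * s p.1 = c * N p.2.2} :=
  Equiv.bijOn _ fun p => map_inv_mul_map_inv_mul_eq_iff N N' (s p.1) c p.2.1 p.2.2

end Substitution

section QuadraticNorm

variable {R S : Type*} [CommRing R] [CommRing S] [Algebra R S]

theorem norm_smul_one_add_smul {g : S} (b : Module.Basis (Fin 2) R S) (hb : ⇑b = ![1, g])
    {d n : R} (hg : g * g = d • g - n • 1) (u v : R) :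
    Algebra.norm R (u • 1 + v • g) = u ^ 2 + u * v * d + v ^ 2 * n := by
  have hb₀ : b 0 = 1 := by simp [hb]
  have hb₁ : b 1 = g := by simp [hb]
  have hrepr_one : b.repr 1 = Finsupp.single 0 1 := by rw [← hb₀, b.repr_self]
  have hrepr_g : b.repr g = Finsupp.single 1 1 := by rw [← hb₁, b.repr_self]
  have hmatrix : Algebra.leftMulMatrix b g = !![0, -n; 1, d] := by
    ext i j
    rw [Algebra.leftMulMatrix_eq_repr_mul]
    fin_cases i <;> fin_cases j <;> simp [hb₀, hb₁, hg, hrepr_one, hrepr_g]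
  have hmatrix_add : Algebra.leftMulMatrix b (u • 1 + v • g) = !![u, -(v * n); v, u + v * d] := by
    rw [map_add, map_smul, map_smul, map_one, hmatrix]
    ext i j
    fin_cases i <;> fin_cases j <;> simp
  rw [Algebra.norm_eq_matrix_det b, hmatrix_add, Matrix.det_fin_two_of]
  ring

theorem algebraMap_norm_eq_mul_of_basis {g : S} (b : Module.Basis (Fin 2) R S)
    (hb : ⇑b = ![1, g]) (σ : S →ₐ[R] S) {d n : R} (hadd : g + σ g = algebraMap R S d)
    (hmul : g * σ g = algebraMap R S n) (z : S) :
    algebraMap R S (Algebra.norm R z) = z * σ z := by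
  obtain ⟨u, v, rfl⟩ : ∃ u v : R, u • 1 + v • g = z :=
    ⟨b.repr z 0, b.repr z 1, by simpa [Fin.sum_univ_two, hb] using b.sum_repr z⟩
  have hg : g * g = d • g - n • 1 := by
    simp only [Algebra.smul_def, mul_one]
    linear_combination g * hadd - hmul
  rw [norm_smul_one_add_smul b hb hg]
  simp only [Algebra.smul_def, mul_one, map_add, map_mul, map_pow, AlgHom.commutes]
  linear_combination - algebraMap R S u * algebraMap R S v * hadd - algebraMap R S v ^ 2 * hmul

end QuadraticNorm

section BaseChange

variable (k L K B : Type*) [CommRing k] [CommRing L] [CommRing K] [CommRing B]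
  [Algebra k L] [Algebra k K] [Algebra L K] [IsScalarTower k L K] [Algebra k B]

/-- The `(L ⊗_k B)`-algebra structure on `K ⊗_k B` induced by `L → K`, which defines the relative
norm. It is not an instance, since `K ⊗_k B` may already be an `(L ⊗_k B)`-algebra through `K`. -/
noncomputable abbrev tensorAlgebra : Algebra (L ⊗[k] B) (K ⊗[k] B) :=
  (Algebra.TensorProduct.map (IsScalarTower.toAlgHom k L K) (AlgHom.id k B)).toRingHom.toAlgebra

/-- The algebra norm of `K ⊗_k B` over `L ⊗_k B`, the analogue of `normTensor` for an arbitrary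
tower of commutative rings `k → L → K`; for an intermediate field the two agree definitionally. -/
noncomputable def baseChangeNorm : (K ⊗[k] B) →* (L ⊗[k] B) :=
  letI := tensorAlgebra k L K B
  Algebra.norm (L ⊗[k] B)

theorem free_tensorAlgebra [Module.Free L K] :
    letI := tensorAlgebra k L K B
    Module.Free (L ⊗[k] B) (K ⊗[k] B) := by
  let := tensorAlgebra k L K B
  have : IsScalarTower L (L ⊗[k] B) (K ⊗[k] B) := .of_algebraMap_eq fun l => by
    simp [RingHom.algebraMap_toAlgebra]
  have : Algebra.IsPushout L K (L ⊗[k] B) (K ⊗[k] B) :=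
    Algebra.IsPushout.tensorProduct_tensorProduct k B L K <| by
      ext
      simp [RingHom.algebraMap_toAlgebra]
  exact IsBaseChange.free this.symm.out

theorem norm_baseChangeNorm [Module.Free k L] [Module.Free L K] (x : K ⊗[k] B) :
    Algebra.norm B (baseChangeNorm k L K B x) = Algebra.norm B x := by
  let := tensorAlgebra k L K B
  have : Module.Free (L ⊗[k] B) (K ⊗[k] B) := free_tensorAlgebra k L K B
  have : Module.Free B (L ⊗[k] B) :=
    IsBaseChange.free (Algebra.IsPushout.out (R := k) (S := B) (R' := L))
  have : IsScalarTower B (L ⊗[k] B) (K ⊗[k] B) := .of_algebraMap_eq fun c => by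
    simp [RingHom.algebraMap_toAlgebra]
  exact Algebra.norm_norm

variable {k L}

theorem one_tmul_norm_eq_mul_map {α : L} (b : Module.Basis (Fin 2) k L) (hb : ⇑b = ![1, α])
    (σ : L →ₐ[k] L) {d n : k} (hadd : α + σ α = algebraMap k L d)
    (hmul : α * σ α = algebraMap k L n) (z : L ⊗[k] B) :
    (1 : L) ⊗ₜ[k] Algebra.norm B z = z * Algebra.TensorProduct.map σ (AlgHom.id k B) z := by
  let bB : Module.Basis (Fin 2) B (L ⊗[k] B) :=
    (Algebra.IsPushout.out (R := k) (S := B) (R' := L)).basis b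
  have hbB : ⇑bB = ![1, α ⊗ₜ[k] 1] := by
    ext i
    fin_cases i <;> simp [bB, IsBaseChange.basis_apply, hb, Algebra.TensorProduct.one_def]
  let σB : L ⊗[k] B →ₐ[B] L ⊗[k] B :=
    { Algebra.TensorProduct.map σ (AlgHom.id k B) with
      commutes' := fun c => by simp [Algebra.TensorProduct.right_algebraMap_apply] }
  have halgebraMap (c : k) :
      algebraMap k L c ⊗ₜ[k] (1 : B) = algebraMap B (L ⊗[k] B) (algebraMap k B c) :=
    IsScalarTower.algebraMap_apply k B (L ⊗[k] B) c
  refine algebraMap_norm_eq_mul_of_basis bB hbB σB (d := algebraMap k B d)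
    (n := algebraMap k B n) ?_ ?_ z
  · change α ⊗ₜ[k] (1 : B) + σ α ⊗ₜ[k] (1 : B) = _
    rw [← TensorProduct.add_tmul, hadd, halgebraMap]
  · change α ⊗ₜ[k] (1 : B) * σ α ⊗ₜ[k] (1 : B) = _
    rw [Algebra.TensorProduct.tmul_mul_tmul, hmul, mul_one, halgebraMap]

end BaseChange

/-- Here `L = k[X]/(X² - dX + n)`, with conjugate roots `α` and `σ α`; the paper's case is `d = 0`,
`n = -a`. -/
theorem torsor_substitution_split_case_general {k L K B : Type*} [CommRing k] [CommRing L]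
    [CommRing K] [CommRing B] [Algebra k L] [Algebra k K] [Algebra L K] [IsScalarTower k L K]
    [Algebra k B] [Module.Free L K] [Module.Finite L K] {α : L} (b : Module.Basis (Fin 2) k L)
    (hb : ⇑b = ![1, α]) (σ : L →ₐ[k] L) {d n : k} (hadd : α + σ α = algebraMap k L d)
    (hmul : α * σ α = algebraMap k L n) (ρ : L) :
    Set.BijOn (torsorSubstitution B (K ⊗[k] B)ˣ)
      {p | (1 : L) ⊗ₜ[k] p.1 - α ⊗ₜ[k] (1 : B) =
        ρ ⊗ₜ[k] (1 : B) * baseChangeNorm k L K B p.2.1 *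
          Algebra.TensorProduct.map σ (AlgHom.id k B) (baseChangeNorm k L K B p.2.2)}
      {p | (1 : L) ⊗ₜ[k] Algebra.norm B (p.2.1 : K ⊗[k] B) *
          ((1 : L) ⊗ₜ[k] p.1 - α ⊗ₜ[k] (1 : B)) =
        ρ ⊗ₜ[k] (1 : B) * baseChangeNorm k L K B p.2.2} := by
  have : Module.Free k L := .of_basis b
  have hnorm (x : K ⊗[k] B) : (1 : L) ⊗ₜ[k] Algebra.norm B x =
      baseChangeNorm k L K B x *
        Algebra.TensorProduct.map σ (AlgHom.id k B) (baseChangeNorm k L K B x) := by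
    rw [← norm_baseChangeNorm k L K B x, one_tmul_norm_eq_mul_map B b hb σ hadd hmul]
  simp only [hnorm]
  let N : (K ⊗[k] B)ˣ →* L ⊗[k] B := (baseChangeNorm k L K B).comp (Units.coeHom _)
  let σB : L ⊗[k] B →* L ⊗[k] B := Algebra.TensorProduct.map σ (AlgHom.id k B)
  exact bijOn_torsorSubstitution N (σB.comp N) (fun t => 1 ⊗ₜ t - α ⊗ₜ 1) (ρ ⊗ₜ 1)

theorem minpoly_eq_X_sq_sub_C {k A : Type*} [Field k] [Ring A] [Nontrivial A] [Algebra k A]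
    {a : k} {α : A} (ha : ¬∃ x : k, x ^ 2 = a) (hα : α ^ 2 = algebraMap k A a) :
    minpoly k α = Polynomial.X ^ 2 - Polynomial.C a :=
  (minpoly.eq_of_irreducible_of_monic
    (X_pow_sub_C_irreducible_of_prime Nat.prime_two fun x hx => ha ⟨x, hx⟩) (by simp [hα])
    (Polynomial.monic_X_pow_sub_C a two_ne_zero)).symm

theorem exists_basis_adjoin_eq_one_gen {k K : Type*} [Field k] [Field K] [Algebra k K] {α : K}
    (hα : (minpoly k α).natDegree = 2) :
    ∃ b : Module.Basis (Fin 2) k k⟮α⟯, ⇑b = ![1, AdjoinSimple.gen k α] := by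
  have hint : IsIntegral k α := by
    by_contra h
    simp [minpoly.eq_zero h] at hα
  have hdim : (adjoin.powerBasis hint).dim = 2 := by rw [adjoin.powerBasis_dim, hα]
  refine ⟨(adjoin.powerBasis hint).basis.reindex (finCongr hdim), ?_⟩
  ext i
  fin_cases i <;> simp

/-- The isomorphism `T_U ≅ Y` in the split case of the proof of Proposition 4.1
(Derenthal–Smeets–Wei): for every commutative `k`-algebra `B`, the substitution
`(t, x₁, x₂) ↦ (t, x₂⁻¹, x₁x₂⁻¹)` is a bijection from the `B`-points of
`t − α = ρ·N₁(x₁)·σ(N₁(x₂))` onto the `B`-points of `N₂(w)(t − α) = ρ·N₁(y)`,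
with inverse `(t, w, y) ↦ (t, w⁻¹y, w⁻¹)`. -/
theorem torsor_substitution_split_case
    (k K : Type) [Field k] [CharZero k] [Field K] [Algebra k K] [FiniteDimensional k K]
    (a : k) (ha : ¬∃ x : k, x ^ 2 = a)
    (α : K) (hα : α ^ 2 = algebraMap k K a)
    (σ : ↥k⟮α⟯ ≃ₐ[k] ↥k⟮α⟯)
    (hσ : σ (AdjoinSimple.gen k α) = -AdjoinSimple.gen k α)
    (ρ : ↥k⟮α⟯) (hρ : ρ ≠ 0)
    (B : Type) [CommRing B] [Algebra k B] :
    Set.BijOn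
      (fun p : B × (K ⊗[k] B)ˣ × (K ⊗[k] B)ˣ => (p.1, p.2.2⁻¹, p.2.1 * p.2.2⁻¹))
      {p : B × (K ⊗[k] B)ˣ × (K ⊗[k] B)ˣ |
        ((1 : ↥k⟮α⟯) ⊗ₜ[k] p.1) - (AdjoinSimple.gen k α ⊗ₜ[k] (1 : B)) =
          (ρ ⊗ₜ[k] (1 : B)) * normTensor k K k⟮α⟯ B ↑p.2.1 *
            Algebra.TensorProduct.map σ.toAlgHom (AlgHom.id k B)
              (normTensor k K k⟮α⟯ B ↑p.2.2)}
      {p : B × (K ⊗[k] B)ˣ × (K ⊗[k] B)ˣ |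
        ((1 : ↥k⟮α⟯) ⊗ₜ[k] Algebra.norm B (↑p.2.1 : K ⊗[k] B)) *
            (((1 : ↥k⟮α⟯) ⊗ₜ[k] p.1) - (AdjoinSimple.gen k α ⊗ₜ[k] (1 : B))) =
          (ρ ⊗ₜ[k] (1 : B)) * normTensor k K k⟮α⟯ B ↑p.2.2} ∧
    Set.InvOn
      (fun p : B × (K ⊗[k] B)ˣ × (K ⊗[k] B)ˣ => (p.1, p.2.1⁻¹ * p.2.2, p.2.1⁻¹))
      (fun p : B × (K ⊗[k] B)ˣ × (K ⊗[k] B)ˣ => (p.1, p.2.2⁻¹, p.2.1 * p.2.2⁻¹))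
      {p : B × (K ⊗[k] B)ˣ × (K ⊗[k] B)ˣ |
        ((1 : ↥k⟮α⟯) ⊗ₜ[k] p.1) - (AdjoinSimple.gen k α ⊗ₜ[k] (1 : B)) =
          (ρ ⊗ₜ[k] (1 : B)) * normTensor k K k⟮α⟯ B ↑p.2.1 *
            Algebra.TensorProduct.map σ.toAlgHom (AlgHom.id k B)
              (normTensor k K k⟮α⟯ B ↑p.2.2)}
      {p : B × (K ⊗[k] B)ˣ × (K ⊗[k] B)ˣ |
        ((1 : ↥k⟮α⟯) ⊗ₜ[k] Algebra.norm B (↑p.2.1 : K ⊗[k] B)) *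
            (((1 : ↥k⟮α⟯) ⊗ₜ[k] p.1) - (AdjoinSimple.gen k α ⊗ₜ[k] (1 : B))) =
          (ρ ⊗ₜ[k] (1 : B)) * normTensor k K k⟮α⟯ B ↑p.2.2} := by
  have hdeg : (minpoly k α).natDegree = 2 := by
    rw [minpoly_eq_X_sq_sub_C ha hα, Polynomial.natDegree_X_pow_sub_C]
  obtain ⟨b, hb⟩ := exists_basis_adjoin_eq_one_gen hdeg
  have hadd : AdjoinSimple.gen k α + σ (AdjoinSimple.gen k α) = algebraMap k k⟮α⟯ 0 := by
    simp [hσ]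
  have hmul : AdjoinSimple.gen k α * σ (AdjoinSimple.gen k α) = algebraMap k k⟮α⟯ (-a) := by
    ext
    simp [hσ, ← hα, sq]
  exact ⟨torsor_substitution_split_case_general b hb σ.toAlgHom hadd hmul ρ,
    (torsorSubstitution B (K ⊗[k] B)ˣ).invOn.symm⟩
end
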